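/- Let 1 < p < ∞. There exists a constant C > 0 such that for every f ∈ L^p(w_α): the principal value ℋ_1(f)(e^{iτ}) = (1/(2π)) lim_{ε→0⁺} ∫_{(α,2π−α)∖(τ−ε,τ+ε)} f(e^{iθ})/(e^{iτ} − e^{iθ}) dθ exists for almost every τ ∈ (α, 2π − α), and ∫_α^{2π−α} |ℋ_1(f)(e^{iτ})|^p w_α(τ) dτ ≤ C ∫_α^{2π−α} |f(e^{iτ})|^p w_α(τ) dτ. -/

import Mathlib

/-!
The weight `wAC α` is comparable to `d ^ (-1/2)`, where `d` is the distance to the endpoints of the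
arc (`weight_bounds`). Since `1 < p`, this power is so mild that the weighted theorem is a
perturbation of the unweighted one.

*Unweighted theory.* On the circle, the Herglotz transform is bounded on `L^p`, uniformly in the
radius (`riesz_bound`). For `1 < p ≤ 2` and nonnegative nonzero data this is M. Riesz's argument:
the Herglotz integral `F` has positive real part, `‖F‖ ^ p ≤ A (re F) ^ p - B re (F ^ p)` by
`riesz_ineq`, the mean value of `F ^ p` is `F 0 ^ p`, and `re F` is a Poisson integral
(`riesz_pos`). The case `2 ≤ p` follows by duality (`riesz_dual`).

For the principal value, the Herglotz integral of an `L^p` function `g` is the Poisson integral of a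
function in `L^p` (`exists_bdry`, by density of trigonometric polynomials), so it has radial limits
at Lebesgue points by Fatou's theorem (`poisson_tendsto`). The truncated Hilbert transform at scale
`ε` and the Herglotz integral at radius `1 - ε` differ by an approximate identity applied to `g`
(`herglotz_sub_tendsto`), so the truncations converge almost everywhere, to a function controlled
in `L^p` (`circle_hilbert`). As `1 / (e^{iτ} - e^{iθ}) = -½ e^{-iθ} (1 + K)` with `K` the kernel of
the circular transform, the arc inherits both statements (`arc_hilbert`).

*Weighted theory.* Put `m = d ^ (-1/(2p))`, so that `m ^ p` is comparable to the weight. If `f` is in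
the weighted space, then `m f` and `f` are in `L^p`, because `m` is bounded below; so both principal
values exist almost everywhere. The commutator of the transform with multiplication by `m` acts on
`m f` through a kernel with no singularity on the diagonal, dominated by
`d(τ) ^ (-s) max (d(τ), d(θ)) ^ (s - 1)` with `s = 1/(2p)` (`kernel_comm_le`). This kernel is
bounded on `L^p` by Schur's test with a power of `d` as test function (`CK_bound`), so the pointwise
inequality `‖m H f‖ ≤ ‖H (m f)‖ + R` with `R` in `L^p` yields the weighted bound
(`arc_hilbert_weighted`).
-/

open MeasureTheory Filter Set

/-- The Akhiezer-Chebyshev weight on the arc `(α, 2π - α)`. -/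
noncomputable def wAC (α θ : ℝ) : ℝ :=
  Real.sin (α / 2) /
    (2 * Real.sin (θ / 2) * Real.sqrt (Real.cos (α / 2) ^ 2 - Real.cos (θ / 2) ^ 2))

open scoped ENNReal

/-! ### Schur's test and an inequality on the right half-plane -/

/-- Schur's test: a nonnegative kernel for which powers of the test function `u` are approximate
eigenfunctions, in each variable, is bounded on `L^p`. -/
lemma schur_test {X : Type*} [MeasurableSpace X] {μ : Measure X} [SFinite μ] {p q : ℝ}
    (hpq : p.HolderConjugate q) {K : X → X → ℝ≥0∞} (hK : Measurable (Function.uncurry K))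
    {u : X → ℝ≥0∞} (hu : Measurable u) (hu0 : ∀ᵐ y ∂μ, u y ≠ 0) (hut : ∀ᵐ y ∂μ, u y ≠ ∞)
    {A B : ℝ≥0∞}
    (h1 : ∀ᵐ x ∂μ, ∫⁻ y, K x y * u y ^ q ∂μ ≤ A * u x ^ q)
    (h2 : ∀ᵐ y ∂μ, ∫⁻ x, K x y * u x ^ p ∂μ ≤ B * u y ^ p)
    {g : X → ℝ≥0∞} (hg : Measurable g) :
    ∫⁻ x, (∫⁻ y, K x y * g y ∂μ) ^ p ∂μ ≤ A ^ (p - 1) * B * ∫⁻ y, g y ^ p ∂μ := by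
  have hp0 : 0 < p := hpq.pos
  have hq0 : 0 < q := hpq.symm.pos
  have hp1 : 1 < p := hpq.lt
  have hKx : ∀ x, Measurable (K x) := fun x => hK.comp measurable_prodMk_left
  have hKy : ∀ y, Measurable (fun x => K x y) := fun x => hK.comp measurable_prodMk_right
  have hsum : 1 / q + 1 / p = 1 := by
    have := hpq.inv_add_inv_eq_one; simp only [one_div]; linarith
  have step : ∀ᵐ x ∂μ, (∫⁻ y, K x y * g y ∂μ) ^ p ≤
      A ^ (p - 1) * (u x ^ p * ∫⁻ y, K x y * (g y ^ p * (u y)⁻¹ ^ p) ∂μ) := by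
    filter_upwards [h1] with x hx
    have e1 : ∫⁻ y, K x y * g y ∂μ =
        ∫⁻ y, ((fun y => K x y ^ (1 / q) * u y) * (fun y => K x y ^ (1 / p) * (g y * (u y)⁻¹))) y ∂μ := by
      apply lintegral_congr_ae
      filter_upwards [hu0, hut] with y hy0 hyt
      have : K x y ^ (1 / q) * K x y ^ (1 / p) = K x y := by
        rw [← ENNReal.rpow_add_of_nonneg _ _ (by positivity) (by positivity), hsum,
          ENNReal.rpow_one]
      calc K x y * g y = (K x y ^ (1 / q) * K x y ^ (1 / p)) * g y * (u y * (u y)⁻¹) := by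
            rw [this, ENNReal.mul_inv_cancel hy0 hyt, mul_one]
        _ = _ := by simp only [Pi.mul_apply]; ring
    have e2 := ENNReal.lintegral_mul_le_Lp_mul_Lq μ hpq.symm
      (f := fun y => K x y ^ (1 / q) * u y) (g := fun y => K x y ^ (1 / p) * (g y * (u y)⁻¹))
      (by fun_prop) (by fun_prop)
    have e3 : ∀ y, (K x y ^ (1 / q) * u y) ^ q = K x y * u y ^ q := by
      intro y
      rw [ENNReal.mul_rpow_of_nonneg _ _ hq0.le, ← ENNReal.rpow_mul, one_div,
        inv_mul_cancel₀ hq0.ne', ENNReal.rpow_one]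
    have e4 : ∀ y, (K x y ^ (1 / p) * (g y * (u y)⁻¹)) ^ p = K x y * (g y ^ p * (u y)⁻¹ ^ p) := by
      intro y
      rw [ENNReal.mul_rpow_of_nonneg _ _ hp0.le, ← ENNReal.rpow_mul, one_div,
        inv_mul_cancel₀ hp0.ne', ENNReal.rpow_one, ENNReal.mul_rpow_of_nonneg _ _ hp0.le]
    simp only [e3, e4] at e2
    rw [e1]
    refine (ENNReal.rpow_le_rpow e2 hp0.le).trans ?_
    rw [ENNReal.mul_rpow_of_nonneg _ _ hp0.le, ← ENNReal.rpow_mul, ← ENNReal.rpow_mul,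
      one_div_mul_cancel hp0.ne', ENNReal.rpow_one, ← mul_assoc]
    gcongr
    have hpq' : 1 / q * p = p - 1 := by
      have := hpq.inv_add_inv_eq_one
      field_simp at this ⊢; linarith
    rw [hpq']
    refine (ENNReal.rpow_le_rpow hx (by linarith)).trans ?_
    rw [ENNReal.mul_rpow_of_nonneg _ _ (by linarith), ← ENNReal.rpow_mul]
    have : q * (p - 1) = p := by
      rw [← hpq']; field_simp
    rw [this]
  refine (lintegral_mono_ae step).trans ?_
  have m1 : Measurable (fun z : X × X => u z.1 ^ p * (K z.1 z.2 * (g z.2 ^ p * (u z.2)⁻¹ ^ p))) := by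
    have : Measurable (fun z : X × X => K z.1 z.2) := hK
    fun_prop
  have m2 : Measurable (fun z : X × X => (K z.1 z.2 * (g z.2 ^ p * (u z.2)⁻¹ ^ p))) := by
    have : Measurable (fun z : X × X => K z.1 z.2) := hK
    fun_prop
  have m3 : Measurable fun x => ∫⁻ y, K x y * (g y ^ p * (u y)⁻¹ ^ p) ∂μ :=
    Measurable.lintegral_prod_right' m2
  rw [lintegral_const_mul _ (by fun_prop), mul_assoc]
  gcongr
  calc ∫⁻ x, u x ^ p * ∫⁻ y, K x y * (g y ^ p * (u y)⁻¹ ^ p) ∂μ ∂μ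
      = ∫⁻ x, ∫⁻ y, u x ^ p * (K x y * (g y ^ p * (u y)⁻¹ ^ p)) ∂μ ∂μ := by
        refine lintegral_congr fun x => ?_
        rw [lintegral_const_mul _ (by have := hKx x; fun_prop)]
    _ = ∫⁻ y, ∫⁻ x, u x ^ p * (K x y * (g y ^ p * (u y)⁻¹ ^ p)) ∂μ ∂μ :=
        lintegral_lintegral_swap m1.aemeasurable
    _ = ∫⁻ y, (g y ^ p * (u y)⁻¹ ^ p) * ∫⁻ x, K x y * u x ^ p ∂μ ∂μ := by
        refine lintegral_congr fun y => ?_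
        rw [← lintegral_const_mul _ (by have := hKy y; fun_prop)]
        refine lintegral_congr fun x => ?_
        ring
    _ ≤ ∫⁻ y, B * g y ^ p ∂μ := by
        refine lintegral_mono_ae ?_
        filter_upwards [h2, hu0, hut] with y hy hy0 hyt
        calc _ ≤ (g y ^ p * (u y)⁻¹ ^ p) * (B * u y ^ p) := by gcongr
          _ = B * g y ^ p * ((u y)⁻¹ * u y) ^ p := by
            rw [ENNReal.mul_rpow_of_nonneg _ _ hp0.le]; ring
          _ = _ := by rw [ENNReal.inv_mul_cancel hy0 hyt, ENNReal.one_rpow, mul_one]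
    _ = B * ∫⁻ y, g y ^ p ∂μ := lintegral_const_mul _ (by fun_prop)

/-- The inequality behind M. Riesz's theorem: on the right half-plane `‖z‖ ^ p` is dominated by
`(re z) ^ p` up to a multiple of the harmonic function `re (z ^ p)`. Away from the imaginary axis
`re z` is comparable to `‖z‖`; near it `cos (p * arg z)` is negative. -/
lemma riesz_ineq {p : ℝ} (hp : 1 < p) (hp2 : p ≤ 2) :
    ∃ A B : ℝ, 0 ≤ A ∧ 0 ≤ B ∧ ∀ z : ℂ, 0 < z.re →
      ‖z‖ ^ p ≤ A * z.re ^ p - B * (z ^ (p : ℂ)).re := by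
  have hπ := Real.pi_pos
  -- `φ₀` separates the two sectors: `φ₀ < π / 2`, while `p * φ₀` exceeds `π / 2`.
  set φ₀ : ℝ := (Real.pi / 2 + Real.pi / 2 / p) / 2 with hφ₀
  have hd : Real.pi / 2 / p < Real.pi / 2 := div_lt_self (by positivity) hp
  have hd0 : 0 < Real.pi / 2 / p := by positivity
  have h1 : φ₀ < Real.pi / 2 := by rw [hφ₀]; linarith
  have h0 : 0 < φ₀ := by rw [hφ₀]; linarith
  have h2 : Real.pi / 2 < p * φ₀ := by
    have : Real.pi / 2 = p * (Real.pi / 2 / p) := by field_simp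
    rw [this]; apply mul_lt_mul_of_pos_left _ (by linarith); rw [hφ₀]; linarith
  have hcos0 : 0 < Real.cos φ₀ := Real.cos_pos_of_mem_Ioo ⟨by linarith, h1⟩
  have hpφ : p * φ₀ ≤ Real.pi := by nlinarith
  have hcneg : Real.cos (p * φ₀) < 0 :=
    Real.cos_neg_of_pi_div_two_lt_of_lt h2 (by linarith)
  set B : ℝ := (-Real.cos (p * φ₀))⁻¹ with hB
  have hB0 : 0 < B := inv_pos.mpr (by linarith)
  set A : ℝ := (1 + B) / Real.cos φ₀ ^ p with hA
  have hcp : 0 < Real.cos φ₀ ^ p := Real.rpow_pos_of_pos hcos0 p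
  refine ⟨A, B, by positivity, hB0.le, fun z hz => ?_⟩
  have hz0 : z ≠ 0 := by rintro rfl; simp at hz
  have hn : 0 < ‖z‖ := norm_pos_iff.mpr hz0
  have hnp : 0 < ‖z‖ ^ p := Real.rpow_pos_of_pos hn p
  have hre : (z ^ (p : ℂ)).re = ‖z‖ ^ p * Real.cos (p * z.arg) := by
    rw [Complex.cpow_ofReal_re, mul_comm p]
  have harg : |z.arg| < Real.pi / 2 := Complex.abs_arg_lt_pi_div_two_iff.mpr (Or.inl hz)
  have hzre : z.re = ‖z‖ * Real.cos |z.arg| := by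
    rw [Real.cos_abs, Complex.norm_mul_cos_arg]
  have hcosabs : Real.cos (p * z.arg) = Real.cos (p * |z.arg|) := by
    rw [← Real.cos_abs, abs_mul, abs_of_pos (by linarith : 0 < p)]
  rw [hre, hcosabs]
  rcases le_total φ₀ |z.arg| with h | h
  · have : Real.cos (p * |z.arg|) ≤ Real.cos (p * φ₀) := by
      apply Real.cos_le_cos_of_nonneg_of_le_pi (by positivity)
      · nlinarith
      · gcongr
    have h3 : 0 ≤ A * z.re ^ p := by positivity
    have h4 : B * (‖z‖ ^ p * Real.cos (p * |z.arg|)) ≤ B * (‖z‖ ^ p * Real.cos (p * φ₀)) := by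
      gcongr
    have h5 : B * (‖z‖ ^ p * Real.cos (p * φ₀)) = - ‖z‖ ^ p := by
      have : Real.cos (p * φ₀) ≠ 0 := hcneg.ne
      rw [hB]; field_simp
    linarith
  · have : Real.cos φ₀ ≤ Real.cos |z.arg| := by
      apply Real.cos_le_cos_of_nonneg_of_le_pi (abs_nonneg _) (by linarith) h
    have h3 : A * (‖z‖ * Real.cos φ₀) ^ p ≤ A * z.re ^ p := by
      rw [hzre]; gcongr
    have h4 : A * (‖z‖ * Real.cos φ₀) ^ p = (1 + B) * ‖z‖ ^ p := by
      rw [Real.mul_rpow hn.le hcos0.le, hA]; field_simp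
    have h5 : B * (‖z‖ ^ p * Real.cos (p * |z.arg|)) ≤ B * (‖z‖ ^ p * 1) := by
      gcongr; exact Real.cos_le_one _
    linarith

/-! ### The Herglotz kernel on the circle -/

instance fact_two_pi_pos : Fact (0 < 2 * Real.pi) := ⟨Real.two_pi_pos⟩

/-- The circle `ℝ / 2πℤ`. -/
abbrev Tor : Type := AddCircle (2 * Real.pi)

/-- Normalised Haar (probability) measure on the circle. -/
noncomputable abbrev μT : Measure Tor := AddCircle.haarAddCircle

/-- The point `e^{ix}` of the unit circle. -/
noncomputable def ee (x : Tor) : ℂ := fourier 1 x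

lemma ee_coe (t : ℝ) : ee (t : Tor) = Complex.exp (t * Complex.I) := by
  rw [ee, fourier_coe_apply]
  congr 1
  have : (Real.pi : ℂ) ≠ 0 := by exact_mod_cast Real.pi_ne_zero
  push_cast; field_simp

@[fun_prop] lemma continuous_ee : Continuous ee := (fourier 1).continuous

@[simp] lemma norm_ee (x : Tor) : ‖ee x‖ = 1 := by
  rw [ee, fourier_one]; exact Circle.norm_coe _

lemma ee_ne_zero (x : Tor) : ee x ≠ 0 := by
  rw [← norm_ne_zero_iff]; simp

lemma conj_ee (x : Tor) : (starRingEnd ℂ) (ee x) = (ee x)⁻¹ := by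
  rw [Complex.inv_def, Complex.normSq_eq_norm_sq]; simp

lemma ee_neg (x : Tor) : ee (-x) = (ee x)⁻¹ := by
  rw [← conj_ee]
  calc ee (-x) = fourier (-1) x := by rw [ee, fourier_apply, fourier_apply]; simp
    _ = _ := fourier_neg (T := 2 * Real.pi) (n := 1) (x := x)

lemma ee_add (x y : Tor) : ee (x + y) = ee x * ee y := by
  simp [ee, AddCircle.toCircle_add]

lemma ee_sub (x y : Tor) : ee (x - y) = ee x * (ee y)⁻¹ := by
  rw [sub_eq_add_neg, ee_add, ee_neg]

lemma fourier_eq_ee (n : ℕ) (x : Tor) : fourier n x = ee x ^ n := by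
  simp [ee, fourier_apply, AddCircle.toCircle_nsmul]

lemma fourier_neg_eq_ee (n : ℕ) (x : Tor) :
    fourier (-(n : ℤ)) x = (starRingEnd ℂ) (ee x ^ n) := by
  rw [fourier_neg, fourier_eq_ee]

lemma integral_eq_circleAverage (Φ : ℂ → ℂ) (r : ℝ) :
    ∫ y, Φ (r * ee y) ∂μT = Real.circleAverage Φ 0 r := by
  rw [AddCircle.integral_haarAddCircle, Real.circleAverage]
  congr 1
  rw [← AddCircle.intervalIntegral_preimage (2 * Real.pi) 0]
  simp only [zero_add]
  refine intervalIntegral.integral_congr fun t _ => ?_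
  simp [ee_coe, circleMap]

/-- The mean value property of holomorphic functions. -/
lemma mean_value {Φ : ℂ → ℂ} {r : ℝ} (hr : 0 ≤ r) (h : DiffContOnCl ℂ Φ (Metric.ball 0 r)) :
    ∫ y, Φ (r * ee y) ∂μT = Φ 0 := by
  rw [integral_eq_circleAverage]
  exact DiffContOnCl.circleAverage (by rwa [abs_of_nonneg hr])

/-- The Herglotz kernel `(z + w) / (z - w)`. -/
noncomputable def hk (w z : ℂ) : ℂ := (z + w) / (z - w)

section kernel
variable {r : ℝ}

lemma norm_r_ee (hr : 0 ≤ r) (y : Tor) : ‖(r : ℂ) * ee y‖ = r := by simp [abs_of_nonneg hr]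

lemma one_sub_le (hr : 0 ≤ r) (x y : Tor) : 1 - r ≤ ‖ee x - r * ee y‖ := by
  have := norm_sub_norm_le (ee x) (r * ee y)
  rwa [norm_r_ee hr, norm_ee] at this

lemma ee_sub_ne (hr : 0 ≤ r) (hr1 : r < 1) (x y : Tor) : ee x - r * ee y ≠ 0 := by
  rw [← norm_pos_iff]; linarith [one_sub_le hr x y]

lemma norm_hk_le (hr : 0 ≤ r) (hr1 : r < 1) (x y : Tor) :
    ‖hk (r * ee y) (ee x)‖ ≤ 2 / (1 - r) := by
  rw [hk, norm_div]
  have h0 : 0 < 1 - r := by linarith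
  gcongr
  · refine (norm_add_le _ _).trans ?_
    rw [norm_r_ee hr, norm_ee]; linarith
  · exact one_sub_le hr x y

/-- Complex conjugation exchanges the two points of the circle. -/
lemma conj_hk (x y : Tor) :
    (starRingEnd ℂ) (hk (r * ee y) (ee x)) = hk (r * ee x) (ee y) := by
  have h1 := ee_ne_zero x
  have h2 := ee_ne_zero y
  simp only [hk, map_div₀, map_add, map_sub, map_mul, conj_ee, Complex.conj_ofReal]
  have e1 : (ee x)⁻¹ + r * (ee y)⁻¹ = (ee x * ee y)⁻¹ * (ee y + r * ee x) := by
    field_simp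
  have e2 : (ee x)⁻¹ - r * (ee y)⁻¹ = (ee x * ee y)⁻¹ * (ee y - r * ee x) := by
    field_simp
  rw [e1, e2, mul_div_mul_left _ _ (by simp [h1, h2])]

/-- The real part of the Herglotz kernel is the Poisson kernel. -/
lemma re_hk (hr : 0 ≤ r) (hr1 : r < 1) (x y : Tor) :
    (hk (r * ee y) (ee x)).re = (1 - r ^ 2) / ‖ee x - r * ee y‖ ^ 2 := by
  have h : ((hk (r * ee y) (ee x)).re : ℂ) =
      (hk (r * ee y) (ee x) + (starRingEnd ℂ) (hk (r * ee y) (ee x))) / 2 := by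
    rw [Complex.add_conj]; push_cast; ring
  have h1 := ee_ne_zero x
  have h2 := ee_ne_zero y
  have h3 := ee_sub_ne hr hr1 x y
  have h4 := ee_sub_ne hr hr1 y x
  have h5 : ((‖ee x - r * ee y‖ ^ 2 : ℝ) : ℂ) = (ee x - r * ee y) * ((ee y - r * ee x) / (ee x * ee y)) := by
    rw [← Complex.normSq_eq_norm_sq, ← Complex.mul_conj]
    congr 1
    simp only [map_sub, map_mul, conj_ee, Complex.conj_ofReal]
    field_simp
  apply Complex.ofReal_injective
  rw [h, conj_hk, Complex.ofReal_div, h5]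
  simp only [hk]
  push_cast
  rw [div_add_div _ _ h3 h4, div_div, mul_div_assoc', div_div_eq_mul_div,
    div_eq_div_iff (by simp [h3, h4]) (by simp [h3, h4])]
  ring

lemma re_hk_nonneg (hr : 0 ≤ r) (hr1 : r < 1) (x y : Tor) :
    0 ≤ (hk (r * ee y) (ee x)).re := by
  rw [re_hk hr hr1]
  have : r ^ 2 ≤ 1 := by nlinarith
  have : 0 ≤ 1 - r ^ 2 := by linarith
  positivity

lemma re_hk_ge (hr : 0 ≤ r) (hr1 : r < 1) (x y : Tor) :
    (1 - r) / 2 ≤ (hk (r * ee y) (ee x)).re := by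
  rw [re_hk hr hr1]
  have h1 : ‖ee x - r * ee y‖ ≤ 1 + r := by
    refine (norm_sub_le _ _).trans ?_
    rw [norm_r_ee hr, norm_ee]
  have h0 : 0 < ‖ee x - r * ee y‖ := norm_pos_iff.mpr (ee_sub_ne hr hr1 x y)
  rw [div_le_div_iff₀ (by norm_num) (by positivity)]
  have : ‖ee x - r * ee y‖ ^ 2 ≤ (1 + r) ^ 2 := by gcongr
  have h2 : (1 + r) ^ 2 ≤ 2 * (1 + r) := by nlinarith
  nlinarith [mul_le_mul_of_nonneg_left (this.trans h2) (by linarith : 0 ≤ 1 - r)]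

lemma continuous_hk (hr : 0 ≤ r) (hr1 : r < 1) :
    Continuous (fun z : Tor × Tor => hk (r * ee z.2) (ee z.1)) := by
  simp only [hk]
  exact Continuous.div (by fun_prop) (by fun_prop) fun z => ee_sub_ne hr hr1 _ _

lemma continuous_hk_left (hr : 0 ≤ r) (hr1 : r < 1) (y : Tor) :
    Continuous (fun x : Tor => hk (r * ee y) (ee x)) :=
  (continuous_hk hr hr1).comp (Continuous.prodMk continuous_id continuous_const)

lemma continuous_hk_right (hr : 0 ≤ r) (hr1 : r < 1) (x : Tor) :
    Continuous (fun y : Tor => hk (r * ee y) (ee x)) :=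
  (continuous_hk hr hr1).comp (Continuous.prodMk continuous_const continuous_id)

lemma integral_hk_right (hr : 0 ≤ r) (hr1 : r < 1) (x : Tor) :
    ∫ y, hk (r * ee y) (ee x) ∂μT = 1 := by
  have := mean_value (Φ := fun w => hk w (ee x)) hr ?_
  · rw [this]; simp [hk, ee_ne_zero]
  · apply DifferentiableOn.diffContOnCl
    refine fun w hw => DifferentiableAt.differentiableWithinAt ?_
    have hw' : ‖w‖ ≤ r := by
      have := Metric.closure_ball_subset_closedBall hw
      simpa using this
    have : ee x - w ≠ 0 := by
      intro h0
      have : ‖ee x‖ = ‖w‖ := by rw [sub_eq_zero.mp h0]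
      rw [norm_ee] at this; linarith
    unfold hk
    fun_prop (disch := assumption)

lemma integral_hk_left (hr : 0 ≤ r) (hr1 : r < 1) (y : Tor) :
    ∫ x, hk (r * ee y) (ee x) ∂μT = 1 := by
  have h : ∫ x, hk (r * ee y) (ee x) ∂μT = ∫ x, (starRingEnd ℂ) (hk (r * ee x) (ee y)) ∂μT := by
    refine integral_congr_ae (Eventually.of_forall fun x => ?_)
    exact (conj_hk y x).symm
  rw [h, integral_conj, integral_hk_right hr hr1]; simp

lemma integrable_hk_left (hr : 0 ≤ r) (hr1 : r < 1) (y : Tor) :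
    Integrable (fun x : Tor => hk (r * ee y) (ee x)) μT :=
  (continuous_hk_left hr hr1 y).integrable_of_hasCompactSupport
    (HasCompactSupport.of_compactSpace _)

lemma integrable_hk_right (hr : 0 ≤ r) (hr1 : r < 1) (x : Tor) :
    Integrable (fun y : Tor => hk (r * ee y) (ee x)) μT :=
  (continuous_hk_right hr hr1 x).integrable_of_hasCompactSupport
    (HasCompactSupport.of_compactSpace _)

lemma integral_re_hk_left (hr : 0 ≤ r) (hr1 : r < 1) (y : Tor) :
    ∫ x, (hk (r * ee y) (ee x)).re ∂μT = 1 := by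
  have := integral_re (integrable_hk_left hr hr1 y) (𝕜 := ℂ)
  simp only [RCLike.re_to_complex] at this
  rw [this, integral_hk_left hr hr1]; simp

lemma integral_re_hk_right (hr : 0 ≤ r) (hr1 : r < 1) (x : Tor) :
    ∫ y, (hk (r * ee y) (ee x)).re ∂μT = 1 := by
  have := integral_re (integrable_hk_right hr hr1 x) (𝕜 := ℂ)
  simp only [RCLike.re_to_complex] at this
  rw [this, integral_hk_right hr hr1]; simp

/-- The Herglotz integral of `g`, evaluated at the point `r e^{iy}` of the disc. -/
noncomputable def HT (r : ℝ) (g : Tor → ℂ) (y : Tor) : ℂ := ∫ x, hk (r * ee y) (ee x) * g x ∂μT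

lemma integrable_hk_mul (hr : 0 ≤ r) (hr1 : r < 1) {g : Tor → ℂ} (hg : Integrable g μT) (y : Tor) :
    Integrable (fun x => hk (r * ee y) (ee x) * g x) μT :=
  hg.bdd_mul (continuous_hk_left hr hr1 y).aestronglyMeasurable
    (Eventually.of_forall fun x => norm_hk_le hr hr1 x y)

lemma continuous_HT (hr : 0 ≤ r) (hr1 : r < 1) {g : Tor → ℂ} (hg : Integrable g μT) :
    Continuous (HT r g) := by
  refine continuous_of_dominated (bound := fun x => 2 / (1 - r) * ‖g x‖)
    (fun y => (integrable_hk_mul hr hr1 hg y).aestronglyMeasurable) ?_ (hg.norm.const_mul _) ?_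
  · refine fun y => Eventually.of_forall fun x => ?_
    rw [norm_mul]; gcongr; exact norm_hk_le hr hr1 x y
  · exact Eventually.of_forall fun x => (continuous_hk_right hr hr1 x).mul continuous_const

lemma differentiableOn_herglotz {g : Tor → ℂ} (hg : Integrable g μT) :
    DifferentiableOn ℂ (fun w => ∫ x, hk w (ee x) * g x ∂μT) (Metric.ball 0 1) := by
  intro w₀ hw₀
  rw [mem_ball_zero_iff] at hw₀
  set ρ := (1 - ‖w₀‖) / 2 with hρ
  have hρ0 : 0 < ρ := by rw [hρ]; linarith
  have hb : ∀ w ∈ Metric.ball w₀ ρ, ∀ x, ρ ≤ ‖ee x - w‖ := by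
    intro w hw x
    have h1 := norm_sub_norm_le (ee x) w
    have h2 : ‖w‖ ≤ ‖w₀‖ + ρ := by
      have := norm_add_le w₀ (w - w₀)
      rw [add_sub_cancel] at this
      rw [Metric.mem_ball, dist_eq_norm] at hw; linarith
    rw [norm_ee] at h1; linarith
  have hne : ∀ w ∈ Metric.ball w₀ ρ, ∀ x, ee x - w ≠ 0 := fun w hw x => by
    rw [← norm_pos_iff]; linarith [hb w hw x]
  have hcont : ∀ w ∈ Metric.ball w₀ ρ, Continuous fun x => hk w (ee x) := fun w hw =>
    Continuous.div (by fun_prop) (by fun_prop) (hne w hw)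
  have hmem := Metric.mem_ball_self (x := w₀) hρ0
  have key := hasDerivAt_integral_of_dominated_loc_of_deriv_le (μ := μT)
    (F := fun w x => hk w (ee x) * g x) (x₀ := w₀)
    (F' := fun w x => 2 * ee x / (ee x - w) ^ 2 * g x) (bound := fun x => 2 / ρ ^ 2 * ‖g x‖)
    (Metric.ball_mem_nhds w₀ hρ0) ?_ ?_ ?_ ?_ (hg.norm.const_mul _) ?_
  · exact key.2.differentiableAt.differentiableWithinAt
  · filter_upwards [Metric.ball_mem_nhds w₀ hρ0] with w hw
    exact (hcont w hw).aestronglyMeasurable.mul hg.1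
  · refine hg.bdd_mul (c := 2 / ρ) (hcont w₀ hmem).aestronglyMeasurable
      (Eventually.of_forall fun x => ?_)
    rw [hk, norm_div]
    gcongr
    · exact (norm_add_le _ _).trans (by rw [norm_ee]; linarith)
    · exact hb w₀ hmem x
  · refine AEStronglyMeasurable.mul (Continuous.aestronglyMeasurable ?_) hg.1
    exact Continuous.div (by fun_prop) (by fun_prop) fun x => pow_ne_zero 2 (hne w₀ hmem x)
  · refine Eventually.of_forall fun x w hw => ?_
    rw [norm_mul, norm_div, norm_mul, norm_ee, norm_pow]
    simp only [Complex.norm_ofNat, mul_one]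
    gcongr
    exact hb w hw x
  · refine Eventually.of_forall fun x w hw => ?_
    have h0 := hne w hw x
    have h1 : HasDerivAt (fun w => hk w (ee x)) (2 * ee x / (ee x - w) ^ 2) w := by
      have := ((hasDerivAt_id w).const_add (ee x)).div ((hasDerivAt_id w).const_sub (ee x)) h0
      refine this.congr_deriv ?_
      simp only [id]; ring
    exact h1.mul_const _

end kernel

/-! ### M. Riesz's theorem for the Herglotz transform -/

lemma HT_add {r : ℝ} (hr : 0 ≤ r) (hr1 : r < 1) {g h : Tor → ℂ} (hg : Integrable g μT)
    (hh : Integrable h μT) (y : Tor) : HT r (fun x => g x + h x) y = HT r g y + HT r h y := by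
  simp only [HT, mul_add]
  exact integral_add (integrable_hk_mul hr hr1 hg y) (integrable_hk_mul hr hr1 hh y)

lemma HT_const_mul {r : ℝ} (c : ℂ) (g : Tor → ℂ) (y : Tor) :
    HT r (fun x => c * g x) y = c * HT r g y := by
  simp only [HT, ← integral_const_mul]
  congr 1; ext x; ring

lemma HT_sub {r : ℝ} (hr : 0 ≤ r) (hr1 : r < 1) {g h : Tor → ℂ} (hg : Integrable g μT)
    (hh : Integrable h μT) (y : Tor) : HT r (fun x => g x - h x) y = HT r g y - HT r h y := by
  simp only [HT, mul_sub]
  exact integral_sub (integrable_hk_mul hr hr1 hg y) (integrable_hk_mul hr hr1 hh y)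

lemma continuous_integrable {E : Type*} [NormedAddCommGroup E] {f : Tor → E} (hf : Continuous f) :
    Integrable f μT :=
  hf.integrable_of_hasCompactSupport (HasCompactSupport.of_compactSpace _)

lemma eLpNorm_ofReal_eq {E : Type*} [NormedAddCommGroup E] {p : ℝ} (hp : 0 < p) (f : Tor → E) :
    eLpNorm f (ENNReal.ofReal p) μT = (∫⁻ x, ‖f x‖ₑ ^ p ∂μT) ^ (1 / p) := by
  rw [eLpNorm_eq_lintegral_rpow_enorm_toReal (by simpa using hp) ENNReal.ofReal_ne_top,
    ENNReal.toReal_ofReal hp.le]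

/-- Averaging against the Poisson kernel does not increase the `L^p` norm. -/
lemma poisson_contraction {p : ℝ} (hp : 1 < p) {r : ℝ} (hr : 0 ≤ r) (hr1 : r < 1)
    {g : Tor → ℝ≥0∞} (hg : Measurable g) :
    ∫⁻ y, (∫⁻ x, ENNReal.ofReal (hk (r * ee y) (ee x)).re * g x ∂μT) ^ p ∂μT ≤
      ∫⁻ x, g x ^ p ∂μT := by
  have hc := Complex.continuous_re.comp (continuous_hk hr hr1)
  have h := schur_test (μ := μT) (Real.HolderConjugate.conjExponent hp)
    (K := fun y x => ENNReal.ofReal (hk (r * ee y) (ee x)).re) (u := fun _ => 1) (A := 1) (B := 1)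
    ?_ measurable_const (by simp) (by simp) ?_ ?_ hg
  · simpa using h
  · exact (ENNReal.continuous_ofReal.comp (hc.comp continuous_swap)).measurable
  · refine Eventually.of_forall fun y => ?_
    simp only [ENNReal.one_rpow, mul_one]
    rw [← ofReal_integral_eq_lintegral_ofReal, integral_re_hk_left hr hr1]
    · simp
    · exact continuous_integrable (Complex.continuous_re.comp (continuous_hk_left hr hr1 y))
    · exact Eventually.of_forall fun x => re_hk_nonneg hr hr1 x y
  · refine Eventually.of_forall fun x => ?_
    simp only [ENNReal.one_rpow, mul_one]
    rw [← ofReal_integral_eq_lintegral_ofReal, integral_re_hk_right hr hr1]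
    · simp
    · exact continuous_integrable (Complex.continuous_re.comp (continuous_hk_right hr hr1 x))
    · exact Eventually.of_forall fun y => re_hk_nonneg hr hr1 x y

/-- M. Riesz's inequality for nonnegative data and `1 < p ≤ 2`: integrate `riesz_ineq` along the
Herglotz integral `F` of `g`. The mean value of `F ^ p` is the nonnegative number `F 0 ^ p`, and
`re F` is the Poisson integral of `g`. -/
lemma riesz_pos {p : ℝ} (hp : 1 < p) (hp2 : p ≤ 2) :
    ∃ A : ℝ, 0 ≤ A ∧ ∀ r : ℝ, 0 ≤ r → r < 1 → ∀ g : Tor → ℝ, Measurable g → (∀ x, 0 ≤ g x) →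
      Integrable g μT →
      ∫⁻ y, ‖HT r (fun x => (g x : ℂ)) y‖ₑ ^ p ∂μT ≤
        ENNReal.ofReal A * ∫⁻ x, ‖g x‖ₑ ^ p ∂μT := by
  obtain ⟨A, B, hA, hB, hAB⟩ := riesz_ineq hp hp2
  refine ⟨A, hA, fun r hr hr1 g hgm hg0 hgi => ?_⟩
  have hp0 : 0 < p := by linarith
  set F : ℂ → ℂ := fun w => ∫ x, hk w (ee x) * (g x : ℂ) ∂μT with hF
  have hgi' : Integrable (fun x => (g x : ℂ)) μT := hgi.ofReal
  have hre : ∀ ρ : ℝ, 0 ≤ ρ → ρ < 1 → ∀ y, (HT ρ (fun x => (g x : ℂ)) y).re =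
      ∫ x, (hk (ρ * ee y) (ee x)).re * g x ∂μT := by
    intro ρ hρ hρ1 y
    have := integral_re (integrable_hk_mul hρ hρ1 hgi' y) (𝕜 := ℂ)
    simp only [RCLike.re_to_complex, Complex.re_mul_ofReal] at this
    rw [HT, this]
  have hint : ∀ ρ : ℝ, 0 ≤ ρ → ρ < 1 → ∀ y,
      Integrable (fun x => (hk (ρ * ee y) (ee x)).re * g x) μT := by
    intro ρ hρ hρ1 y
    simpa only [RCLike.re_to_complex, Complex.re_mul_ofReal] using
      (integrable_hk_mul hρ hρ1 hgi' y).re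
  have hI0 : 0 ≤ ∫ x, g x ∂μT := integral_nonneg hg0
  rcases hI0.eq_or_lt with hz | hpos
  · have hg : g =ᵐ[μT] 0 := (integral_eq_zero_iff_of_nonneg hg0 hgi).mp hz.symm
    have : ∀ y, HT r (fun x => (g x : ℂ)) y = 0 := by
      intro y
      rw [HT]
      refine integral_eq_zero_of_ae ?_
      filter_upwards [hg] with x hx
      simp [hx]
    simp [this, hp0]
  have hre_pos : ∀ ρ : ℝ, 0 ≤ ρ → ρ < 1 → ∀ y, 0 < (HT ρ (fun x => (g x : ℂ)) y).re := by
    intro ρ hρ hρ1 y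
    rw [hre ρ hρ hρ1]
    have : ∫ x, (1 - ρ) / 2 * g x ∂μT ≤ ∫ x, (hk (ρ * ee y) (ee x)).re * g x ∂μT := by
      refine integral_mono (hgi.const_mul _) (hint ρ hρ hρ1 y) fun x => ?_
      exact mul_le_mul_of_nonneg_right (re_hk_ge hρ hρ1 x y) (hg0 x)
    rw [integral_const_mul] at this
    have h2 : 0 < (1 - ρ) / 2 := by linarith
    have := mul_pos h2 hpos
    linarith
  -- the holomorphic function `F` has positive real part, so `F ^ p` is holomorphic
  have hFdiff : DifferentiableOn ℂ F (Metric.ball 0 1) := differentiableOn_herglotz hgi'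
  have hFpos : ∀ w ∈ Metric.ball (0 : ℂ) 1, 0 < (F w).re := by
    intro w hw
    rw [mem_ball_zero_iff] at hw
    have h := hre_pos ‖w‖ (norm_nonneg _) hw (w.arg : ℝ)
    rw [HT, ee_coe, Complex.norm_mul_exp_arg_mul_I] at h
    exact h
  have hmean : ∫ y, (F (r * ee y)) ^ (p : ℂ) ∂μT = (F 0) ^ (p : ℂ) := by
    refine mean_value (Φ := fun w => (F w) ^ (p : ℂ)) hr ?_
    apply DifferentiableOn.diffContOnCl
    have hsub : closure (Metric.ball (0 : ℂ) r) ⊆ Metric.ball 0 1 :=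
      Metric.closure_ball_subset_closedBall.trans (Metric.closedBall_subset_ball hr1)
    refine fun w hw => (DifferentiableWithinAt.cpow_const (hFdiff w (hsub hw)) ?_).mono hsub
    exact Or.inl (hFpos w (hsub hw))
  have hF0 : F 0 = ((∫ x, g x ∂μT : ℝ) : ℂ) := by
    rw [hF, ← integral_complex_ofReal]
    refine integral_congr_ae (Eventually.of_forall fun x => ?_)
    simp [hk, ee_ne_zero]
  have hFHT : ∀ y, F (r * ee y) = HT r (fun x => (g x : ℂ)) y := fun y => rfl
  have hcH := continuous_HT hr hr1 hgi'
  set H := HT r (fun x => (g x : ℂ)) with hH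
  have hcHp : Continuous fun y => (H y) ^ (p : ℂ) :=
    hcH.cpow continuous_const fun y => Or.inl (hre_pos r hr hr1 y)
  have hcre : Continuous fun y => (H y).re ^ p :=
    (Complex.continuous_re.comp hcH).rpow_const fun y => Or.inr hp0.le
  have hcn : Continuous fun y => ‖H y‖ ^ p := hcH.norm.rpow_const fun y => Or.inr hp0.le
  have hreal : ∫ y, ‖H y‖ ^ p ∂μT ≤ A * ∫ y, (H y).re ^ p ∂μT := by
    have h1 : ∫ y, ‖H y‖ ^ p ∂μT ≤
        ∫ y, (A * (H y).re ^ p - B * ((H y) ^ (p : ℂ)).re) ∂μT :=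
      integral_mono (continuous_integrable hcn)
        (continuous_integrable (by
          have := Complex.continuous_re.comp hcHp
          exact (continuous_const.mul hcre).sub (continuous_const.mul this)))
        fun y => hAB (H y) (hre_pos r hr hr1 y)
    have hi2 : Integrable (fun y => ((H y) ^ (p : ℂ)).re) μT :=
      continuous_integrable (Complex.continuous_re.comp hcHp)
    rw [integral_sub ((continuous_integrable hcre).const_mul _) (hi2.const_mul _),
      integral_const_mul, integral_const_mul] at h1
    have h2 : ∫ y, ((H y) ^ (p : ℂ)).re ∂μT = (∫ x, g x ∂μT) ^ p := by
      have := integral_re (continuous_integrable hcHp) (𝕜 := ℂ)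
      simp only [RCLike.re_to_complex] at this
      rw [this]
      have h3 := hmean
      simp only [hFHT] at h3
      rw [h3, hF0, ← Complex.ofReal_cpow hI0, Complex.ofReal_re]
    rw [h2] at h1
    have : 0 ≤ B * (∫ x, g x ∂μT) ^ p := by positivity
    linarith
  calc ∫⁻ y, ‖H y‖ₑ ^ p ∂μT = ENNReal.ofReal (∫ y, ‖H y‖ ^ p ∂μT) := by
        rw [ofReal_integral_eq_lintegral_ofReal (continuous_integrable hcn)
          (Eventually.of_forall fun y => by positivity)]
        refine lintegral_congr fun y => ?_
        rw [← ENNReal.ofReal_rpow_of_nonneg (norm_nonneg _) hp0.le, ofReal_norm]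
    _ ≤ ENNReal.ofReal (A * ∫ y, (H y).re ^ p ∂μT) := ENNReal.ofReal_le_ofReal hreal
    _ = ENNReal.ofReal A * ∫⁻ y, (∫⁻ x, ENNReal.ofReal (hk (r * ee y) (ee x)).re * ‖g x‖ₑ ∂μT) ^ p ∂μT := by
        rw [ENNReal.ofReal_mul hA, ofReal_integral_eq_lintegral_ofReal (continuous_integrable hcre)
          (Eventually.of_forall fun y => by
            have := (hre_pos r hr hr1 y).le
            simp only [Pi.zero_apply]; positivity)]
        congr 1
        refine lintegral_congr fun y => ?_
        rw [← ENNReal.ofReal_rpow_of_nonneg (hre_pos r hr hr1 y).le hp0.le, hre r hr hr1,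
          ofReal_integral_eq_lintegral_ofReal (hint r hr hr1 y)
            (Eventually.of_forall fun x => mul_nonneg (re_hk_nonneg hr hr1 x y) (hg0 x))]
        congr 1
        refine lintegral_congr fun x => ?_
        rw [ENNReal.ofReal_mul (re_hk_nonneg hr hr1 x y), Real.enorm_of_nonneg (hg0 x)]
    _ ≤ _ := by
        exact mul_le_mul_right (poisson_contraction hp hr hr1 hgm.enorm) _

/-- `L^p` boundedness, uniformly in `r`, of the Herglotz transform. -/
def RieszBound (p : ℝ) : Prop :=
  ∃ C : NNReal, ∀ r : ℝ, 0 ≤ r → r < 1 → ∀ g : Tor → ℂ, Measurable g →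
    MemLp g (ENNReal.ofReal p) μT →
      eLpNorm (HT r g) (ENNReal.ofReal p) μT ≤ C * eLpNorm g (ENNReal.ofReal p) μT

lemma integrable_of_memLp {E : Type*} [NormedAddCommGroup E] {p : ℝ} (hp : 1 < p) {g : Tor → E}
    (hg : MemLp g (ENNReal.ofReal p) μT) : Integrable g μT :=
  hg.integrable (by rw [← ENNReal.ofReal_one]; exact ENNReal.ofReal_le_ofReal hp.le)

/-- The passage from nonnegative to complex data: split the real and imaginary parts of `g` into
positive and negative parts. -/
lemma riesz_le_two {p : ℝ} (hp : 1 < p) (hp2 : p ≤ 2) : RieszBound p := by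
  obtain ⟨A, hA, h⟩ := riesz_pos hp hp2
  have hp0 : 0 < p := by linarith
  have hP1 : 1 ≤ ENNReal.ofReal p := by
    rw [← ENNReal.ofReal_one]; exact ENNReal.ofReal_le_ofReal hp.le
  set D : ℝ≥0∞ := (ENNReal.ofReal A) ^ (1 / p) with hD
  have hDt : D ≠ ∞ := ENNReal.rpow_ne_top_of_nonneg (by positivity) ENNReal.ofReal_ne_top
  have key : ∀ r : ℝ, 0 ≤ r → r < 1 → ∀ g : Tor → ℂ, ∀ k : Tor → ℝ, Measurable k →
      (∀ x, 0 ≤ k x) → (∀ x, k x ≤ ‖g x‖) → MemLp g (ENNReal.ofReal p) μT →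
      eLpNorm (HT r (fun x => (k x : ℂ))) (ENNReal.ofReal p) μT ≤
        D * eLpNorm g (ENNReal.ofReal p) μT := by
    intro r hr hr1 g k hk hk0 hkg hg
    have hki : Integrable k μT :=
      Integrable.mono (integrable_of_memLp hp hg) hk.aestronglyMeasurable
        (Eventually.of_forall fun x => by rw [Real.norm_of_nonneg (hk0 x)]; exact hkg x)
    have h1 := h r hr hr1 k hk hk0 hki
    calc _ ≤ D * eLpNorm k (ENNReal.ofReal p) μT := by
          rw [eLpNorm_ofReal_eq hp0, eLpNorm_ofReal_eq hp0, hD,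
            ← ENNReal.mul_rpow_of_nonneg _ _ (by positivity)]
          gcongr
      _ ≤ _ := by
          gcongr
          exact eLpNorm_mono fun x => by rw [Real.norm_of_nonneg (hk0 x)]; exact hkg x
  refine ⟨4 * D.toNNReal, fun r hr hr1 g hgm hg => ?_⟩
  have hgi := integrable_of_memLp hp hg
  set k1 : Tor → ℝ := fun x => max (g x).re 0
  set k2 : Tor → ℝ := fun x => max (-(g x).re) 0
  set k3 : Tor → ℝ := fun x => max (g x).im 0
  set k4 : Tor → ℝ := fun x => max (-(g x).im) 0
  have b1 := key r hr hr1 g k1 (by fun_prop) (fun x => le_max_right _ _)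
    (fun x => max_le ((le_abs_self _).trans (Complex.abs_re_le_norm _)) (norm_nonneg _)) hg
  have b2 := key r hr hr1 g k2 (by fun_prop) (fun x => le_max_right _ _)
    (fun x => max_le ((neg_le_abs _).trans (Complex.abs_re_le_norm _)) (norm_nonneg _)) hg
  have b3 := key r hr hr1 g k3 (by fun_prop) (fun x => le_max_right _ _)
    (fun x => max_le ((le_abs_self _).trans (Complex.abs_im_le_norm _)) (norm_nonneg _)) hg
  have b4 := key r hr hr1 g k4 (by fun_prop) (fun x => le_max_right _ _)
    (fun x => max_le ((neg_le_abs _).trans (Complex.abs_im_le_norm _)) (norm_nonneg _)) hg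
  have i1 : Integrable (fun x => (k1 x : ℂ)) μT := hgi.re.pos_part.ofReal
  have i2 : Integrable (fun x => (k2 x : ℂ)) μT := hgi.re.neg_part.ofReal
  have i3 : Integrable (fun x => (k3 x : ℂ)) μT := hgi.im.pos_part.ofReal
  have i4 : Integrable (fun x => (k4 x : ℂ)) μT := hgi.im.neg_part.ofReal
  have hmx : ∀ t : ℝ, max t 0 - max (-t) 0 = t := fun t => by
    rcases le_total t 0 with h | h
    · rw [max_eq_right h, max_eq_left (by linarith)]; ring
    · rw [max_eq_left h, max_eq_right (by linarith)]; ring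
  have hdec : g = fun x => ((k1 x : ℂ) - k2 x) + Complex.I * ((k3 x : ℂ) - k4 x) := by
    ext x
    have e1 := hmx (g x).re
    have e2 := hmx (g x).im
    apply Complex.ext
    · simp [k1, k2, k3, k4, e1]
    · simp [k1, k2, k3, k4, e2]
  set H1 := HT r (fun x => (k1 x : ℂ))
  set H2 := HT r (fun x => (k2 x : ℂ))
  set H3 := HT r (fun x => (k3 x : ℂ))
  set H4 := HT r (fun x => (k4 x : ℂ))
  have hHT : HT r g = (H1 - H2) + Complex.I • (H3 - H4) := by
    ext y
    conv_lhs => rw [hdec]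
    have := HT_add hr hr1 (g := fun x => (k1 x : ℂ) - k2 x)
      (h := fun x => Complex.I * ((k3 x : ℂ) - k4 x)) (i1.sub i2) ((i3.sub i4).const_mul _) y
    rw [this, HT_const_mul, HT_sub hr hr1 i1 i2, HT_sub hr hr1 i3 i4]
    rfl
  have c1 := (continuous_HT hr hr1 i1).aestronglyMeasurable (μ := μT)
  have c2 := (continuous_HT hr hr1 i2).aestronglyMeasurable (μ := μT)
  have c3 := (continuous_HT hr hr1 i3).aestronglyMeasurable (μ := μT)
  have c4 := (continuous_HT hr hr1 i4).aestronglyMeasurable (μ := μT)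
  rw [hHT]
  refine (eLpNorm_add_le (c1.sub c2) ((c3.sub c4).const_smul _) hP1).trans ?_
  rw [eLpNorm_const_smul]
  have e12 := eLpNorm_sub_le c1 c2 hP1
  have e34 := eLpNorm_sub_le c3 c4 hP1
  have hI : ‖Complex.I‖ₑ = 1 := by rw [← ofReal_norm]; simp
  rw [hI, one_mul]
  push_cast
  rw [ENNReal.coe_toNNReal hDt]
  set E := eLpNorm g (ENNReal.ofReal p) μT
  calc _ ≤ (D * E + D * E) + (D * E + D * E) := by
        gcongr
        · exact e12.trans (by gcongr)
        · exact e34.trans (by gcongr)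
    _ = 4 * D * E := by ring

/-- Up to conjugation, the Herglotz transform is its own adjoint. -/
lemma integral_HT_mul {r : ℝ} (hr : 0 ≤ r) (hr1 : r < 1) {g h : Tor → ℂ} (hg : Integrable g μT)
    (hh : Integrable h μT) :
    ∫ y, HT r g y * h y ∂μT =
      ∫ x, g x * (starRingEnd ℂ) (HT r (fun y => (starRingEnd ℂ) (h y)) x) ∂μT := by
  have h1 : ∀ y, HT r g y * h y = ∫ x, hk (r * ee y) (ee x) * (g x * h y) ∂μT := fun y => by
    rw [HT, ← integral_mul_const]; congr 1; ext x; ring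
  have h2 : ∀ x, g x * (starRingEnd ℂ) (HT r (fun y => (starRingEnd ℂ) (h y)) x) =
      ∫ y, hk (r * ee y) (ee x) * (g x * h y) ∂μT := fun x => by
    rw [HT, ← integral_conj, ← integral_const_mul]; congr 1; ext y
    rw [map_mul, conj_hk]; simp; ring
  simp only [h1, h2]
  rw [integral_integral_swap]
  have : Integrable (fun z : Tor × Tor => h z.1 * g z.2) (μT.prod μT) := hh.mul_prod hg
  refine (this.bdd_mul (c := 2 / (1 - r)) (f := fun z : Tor × Tor => hk (r * ee z.1) (ee z.2))
    ((continuous_hk hr hr1).comp continuous_swap).aestronglyMeasurable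
    (Eventually.of_forall fun z => norm_hk_le hr hr1 _ _)).congr ?_
  exact Eventually.of_forall fun z => by simp only [Function.uncurry]; ring

/-- Duality: with `F` the Herglotz integral of `g`, the integral of `‖F‖ ^ p` is the pairing of `F`
with `conj F * ‖F‖ ^ (p - 2)`, which is estimated by moving the transform to the other factor. -/
lemma riesz_dual {p q : ℝ} (hpq : p.HolderConjugate q) (hp2 : 2 ≤ p) (hq : RieszBound q) :
    RieszBound p := by
  obtain ⟨C, hC⟩ := hq
  refine ⟨C, fun r hr hr1 g hgm hg => ?_⟩
  have hp0 := hpq.pos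
  have hq0 := hpq.symm.pos
  have hgi := integrable_of_memLp hpq.lt hg
  have hcF := continuous_HT hr hr1 hgi
  set F := HT r g with hF
  set h : Tor → ℂ := fun y => (starRingEnd ℂ) (F y) * ((‖F y‖ ^ (p - 2) : ℝ) : ℂ) with hh
  have hch : Continuous h := by
    have : Continuous fun y => ‖F y‖ ^ (p - 2) :=
      hcF.norm.rpow_const fun y => Or.inr (by linarith)
    exact (Complex.continuous_conj.comp hcF).mul (Complex.continuous_ofReal.comp this)
  have hnn : ∀ y, F y * h y = ((‖F y‖ ^ p : ℝ) : ℂ) := by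
    intro y
    rw [hh]
    simp only
    rw [← mul_assoc, Complex.mul_conj, Complex.normSq_eq_norm_sq, ← Complex.ofReal_mul]
    congr 1
    rw [← Real.rpow_natCast, ← Real.rpow_add_of_nonneg (norm_nonneg _) (by norm_num) (by linarith)]
    norm_num
  have hnq : ∀ y, ‖h y‖ₑ ^ q = ‖F y‖ₑ ^ p := by
    intro y
    have h1 : ‖h y‖ = ‖F y‖ ^ (p - 1) := by
      rw [hh]
      simp only [norm_mul, RCLike.norm_conj, Complex.norm_real]
      rw [Real.norm_of_nonneg (by positivity)]
      nth_rewrite 1 [← Real.rpow_one ‖F y‖]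
      rw [← Real.rpow_add_of_nonneg (norm_nonneg _) (by norm_num) (by linarith)]
      congr 1; ring
    rw [← ofReal_norm, ← ofReal_norm, h1,
      ENNReal.ofReal_rpow_of_nonneg (by positivity) hq0.le,
      ENNReal.ofReal_rpow_of_nonneg (by positivity) hp0.le,
      ← Real.rpow_mul (norm_nonneg _)]
    congr 2
    have := hpq.inv_add_inv_eq_one
    field_simp at this; linarith
  have hcn : Continuous fun y => ‖F y‖ ^ p := hcF.norm.rpow_const fun y => Or.inr hp0.le
  set N : ℝ≥0∞ := ∫⁻ y, ‖F y‖ₑ ^ p ∂μT with hN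
  have hN1 : N = ENNReal.ofReal (∫ y, ‖F y‖ ^ p ∂μT) := by
    rw [ofReal_integral_eq_lintegral_ofReal (continuous_integrable hcn)
          (Eventually.of_forall fun y => by positivity)]
    refine lintegral_congr fun y => ?_
    rw [← ENNReal.ofReal_rpow_of_nonneg (norm_nonneg _) hp0.le, ofReal_norm]
  have hNt : N ≠ ∞ := by rw [hN1]; exact ENNReal.ofReal_ne_top
  have hN2 : N = ‖∫ y, F y * h y ∂μT‖ₑ := by
    simp only [hnn]
    rw [integral_complex_ofReal, hN1, ← ofReal_norm, Complex.norm_real, Real.norm_of_nonneg]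
    exact integral_nonneg fun y => by positivity
  set k := fun y => (starRingEnd ℂ) (h y) with hk
  have hck : Continuous k := Complex.continuous_conj.comp hch
  have hkN : ∫⁻ y, ‖k y‖ₑ ^ q ∂μT = N := by
    refine lintegral_congr fun y => ?_
    rw [← hnq, hk]; simp
  have hkL : MemLp k (ENNReal.ofReal q) μT := by
    refine ⟨hck.aestronglyMeasurable, ?_⟩
    rw [eLpNorm_ofReal_eq hq0, hkN]
    exact ENNReal.rpow_lt_top_of_nonneg (by positivity) hNt
  have hb := hC r hr hr1 k hck.measurable hkL
  rw [eLpNorm_ofReal_eq hq0, eLpNorm_ofReal_eq hq0, hkN] at hb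
  rw [eLpNorm_ofReal_eq hp0, eLpNorm_ofReal_eq hp0, ← hN]
  set G := (∫⁻ x, ‖g x‖ₑ ^ p ∂μT) ^ (1 / p) with hG
  have hmain : N ≤ G * (C * N ^ (1 / q)) := by
    calc N = ‖∫ y, F y * h y ∂μT‖ₑ := hN2
      _ = ‖∫ x, g x * (starRingEnd ℂ) (HT r k x) ∂μT‖ₑ := by
          rw [integral_HT_mul hr hr1 hgi (continuous_integrable hch)]
      _ ≤ ∫⁻ x, ‖g x * (starRingEnd ℂ) (HT r k x)‖ₑ ∂μT := enorm_integral_le_lintegral_enorm _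
      _ = ∫⁻ x, ((fun x => ‖g x‖ₑ) * (fun x => ‖HT r k x‖ₑ)) x ∂μT := by
          refine lintegral_congr fun x => ?_
          simp [enorm_mul]
      _ ≤ _ := ENNReal.lintegral_mul_le_Lp_mul_Lq μT hpq (by fun_prop)
          (continuous_HT hr hr1 (continuous_integrable hck)).enorm.measurable.aemeasurable
      _ ≤ _ := by gcongr
  rcases eq_or_ne N 0 with h0 | h0
  · rw [h0, ENNReal.zero_rpow_of_pos (by positivity)]; exact zero_le
  have hNq0 : N ^ (1 / q) ≠ 0 := by
    simp [ENNReal.rpow_eq_zero_iff, h0, hNt]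
  have hNqt : N ^ (1 / q) ≠ ∞ := ENNReal.rpow_ne_top_of_nonneg (by positivity) hNt
  have hsum : 1 / p + 1 / q = 1 := by
    have := hpq.inv_add_inv_eq_one; simpa [one_div] using this
  have h3 : N ^ (1 / p) * N ^ (1 / q) ≤ (C * G) * N ^ (1 / q) := by
    rw [← ENNReal.rpow_add _ _ h0 hNt, hsum, ENNReal.rpow_one]
    calc N ≤ _ := hmain
      _ = _ := by ring
  exact (ENNReal.mul_le_mul_iff_left hNq0 hNqt).mp h3

/-- M. Riesz's theorem for the Herglotz transform. -/
lemma riesz_bound {p : ℝ} (hp : 1 < p) : RieszBound p := by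
  rcases le_total p 2 with h | h
  · exact riesz_le_two hp h
  · have hpq := Real.HolderConjugate.conjExponent hp
    refine riesz_dual hpq h (riesz_le_two hpq.symm.lt ?_)
    rw [Real.conjExponent, div_le_iff₀ (by linarith)]
    linarith

/-! ### Lebesgue points and approximate identities -/

lemma exists_rep (z : Tor) : ∃ t : ℝ, (t : Tor) = z ∧ |t| ≤ Real.pi ∧ ‖z‖ = |t| := by
  have hπ := Real.pi_pos
  obtain ⟨⟨t, ht⟩, h⟩ := (AddCircle.equivIoc (2 * Real.pi) (-Real.pi)).symm.surjective z
  have h1 : |t| ≤ Real.pi := by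
    rw [abs_le]; exact ⟨ht.1.le, by have := ht.2; linarith⟩
  refine ⟨t, h, h1, ?_⟩
  rw [← h]
  change ‖(t : Tor)‖ = _
  rw [AddCircle.norm_coe_eq_abs_iff _ (by positivity), abs_of_pos Real.two_pi_pos]
  linarith

/-- Jordan's inequality: arc length is controlled by chord length. -/
lemma chord_ge (x y : Tor) : 2 / Real.pi * ‖x - y‖ ≤ ‖ee x - ee y‖ := by
  obtain ⟨t, ht, h1, h2⟩ := exists_rep (x - y)
  have h3 : ‖ee x - ee y‖ = ‖ee (x - y) - 1‖ := by
    have : ee x - ee y = (ee (x - y) - 1) * ee y := by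
      rw [ee_sub]; field_simp [ee_ne_zero y]
    rw [this, norm_mul, norm_ee, mul_one]
  rw [h3, h2, ← ht, ee_coe, mul_comm (t : ℂ), Complex.norm_exp_I_mul_ofReal_sub_one, norm_mul,
    Real.norm_eq_abs, Real.norm_eq_abs, abs_two]
  have h4 : |t / 2| ≤ Real.pi / 2 := by rw [abs_div, abs_two]; linarith
  have := Real.mul_abs_le_abs_sin h4
  rw [abs_div, abs_two] at this
  linarith

/-- Moving one endpoint radially into the disc at most halves a chord. -/
lemma half_chord_le {r : ℝ} (hr : 0 ≤ r) (hr1 : r < 1) (x y : Tor) :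
    ‖ee x - ee y‖ / 2 ≤ ‖ee x - r * ee y‖ := by
  have h1 := one_sub_le hr x y
  have h2 : ‖ee x - ee y‖ ≤ ‖ee x - r * ee y‖ + (1 - r) := by
    have : ee x - ee y = (ee x - r * ee y) + ((r - 1 : ℝ) : ℂ) * ee y := by push_cast; ring
    rw [this]
    refine (norm_add_le _ _).trans ?_
    rw [norm_mul, norm_ee, Complex.norm_real, Real.norm_eq_abs, abs_of_nonpos (by linarith)]
    linarith
  linarith

/-- `y` is a Lebesgue point of `g`. The integral over the ball is divided by its radius, which is
proportional to its measure once the radius is small. -/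
def LPt (g : Tor → ℂ) (y : Tor) : Prop :=
  Tendsto (fun s : ℝ => (∫⁻ x in Metric.closedBall y s, ‖g x - g y‖ₑ ∂μT) / ENNReal.ofReal s)
    (nhdsWithin 0 (Ioi 0)) (nhds 0)

lemma volume_Tor : (volume : Measure Tor) = ENNReal.ofReal (2 * Real.pi) • μT :=
  AddCircle.volume_eq_smul_haarAddCircle

lemma muT_eq : μT = (ENNReal.ofReal (2 * Real.pi))⁻¹ • (volume : Measure Tor) := by
  rw [volume_Tor, smul_smul, ENNReal.inv_mul_cancel (by simp [Real.pi_pos]) ENNReal.ofReal_ne_top,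
    one_smul]

lemma ae_LPt {g : Tor → ℂ} (hg : Integrable g μT) : ∀ᵐ y ∂μT, LPt g y := by
  have hgv : Integrable g (volume : Measure Tor) := by
    rw [volume_Tor]; exact hg.smul_measure ENNReal.ofReal_ne_top
  have h := IsUnifLocDoublingMeasure.ae_tendsto_average_norm_sub (volume : Measure Tor)
    hgv.locallyIntegrable 0
  rw [muT_eq]
  refine Measure.ae_smul_measure ?_ _
  filter_upwards [h] with y hy
  have h1 := hy (ι := ℝ) (l := nhdsWithin 0 (Ioi 0)) (fun _ => y) id tendsto_id (by simp)
  have h2 : Tendsto (fun s : ℝ => 2 * ENNReal.ofReal (⨍ x in Metric.closedBall y s, ‖g x - g y‖))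
      (nhdsWithin 0 (Ioi 0)) (nhds 0) := by
    have := ENNReal.Tendsto.const_mul (a := 2) (ENNReal.tendsto_ofReal h1) (Or.inr (by simp))
    simpa using this
  refine tendsto_of_tendsto_of_tendsto_of_le_of_le' tendsto_const_nhds h2
    (Eventually.of_forall fun _ => zero_le) ?_
  filter_upwards [self_mem_nhdsWithin] with s hs
  have hs' : (0:ℝ) < s := hs
  have hi : Integrable (fun x => ‖g x - g y‖) (volume : Measure Tor) :=
    (hgv.sub (integrable_const _)).norm
  rw [setAverage_eq, smul_eq_mul, ENNReal.ofReal_mul (by positivity),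
    ofReal_integral_eq_lintegral_ofReal hi.integrableOn (Eventually.of_forall fun _ => norm_nonneg _)]
  simp only [ofReal_norm]
  have hm : (volume : Measure Tor).real (Metric.closedBall y s) ≤ 2 * s := by
    rw [Measure.real, AddCircle.volume_closedBall, ENNReal.toReal_ofReal (by positivity)]
    exact min_le_right _ _
  have hm0 : 0 < (volume : Measure Tor).real (Metric.closedBall y s) := by
    rw [Measure.real, AddCircle.volume_closedBall, ENNReal.toReal_ofReal (by positivity)]
    positivity
  have hle : (∫⁻ x in Metric.closedBall y s, ‖g x - g y‖ₑ ∂μT) ≤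
      ∫⁻ x in Metric.closedBall y s, ‖g x - g y‖ₑ := by
    rw [volume_Tor, Measure.restrict_smul, lintegral_smul_measure, smul_eq_mul]
    refine le_mul_of_one_le_left' ?_
    rw [← ENNReal.ofReal_one]
    exact ENNReal.ofReal_le_ofReal (by linarith [Real.pi_gt_three])
  rw [div_eq_mul_inv, mul_comm, ← mul_assoc]
  refine mul_le_mul' ?_ hle
  rw [← ENNReal.ofReal_inv_of_pos hs']
  have : (2 : ℝ≥0∞) = ENNReal.ofReal 2 := by simp
  rw [this, ← ENNReal.ofReal_mul (by norm_num)]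
  refine ENNReal.ofReal_le_ofReal ?_
  rw [inv_eq_one_div, inv_eq_one_div, mul_one_div, div_le_div_iff₀ hs' hm0]
  linarith

/-- Splitting `{‖x - y‖ ≤ δ}` into dyadic shells, a kernel of width `ε` and quadratic decay is
controlled by the averages of `φ` over balls centred at `y`. -/
lemma kernel_dyadic {φ k : Tor → ℝ≥0∞} (hφ : Measurable φ) (y : Tor) {C ε δ : ℝ} {η : ℝ≥0∞}
    (hC : 0 ≤ C) (hε : 0 < ε) (hδ : ε ≤ δ)
    (hA : ∀ s : ℝ, 0 < s → s ≤ δ → ∫⁻ x in Metric.closedBall y s, φ x ∂μT ≤ η * ENNReal.ofReal s)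
    (hk1 : ∀ x, ‖x - y‖ < ε → k x ≤ ENNReal.ofReal (C / ε))
    (hk2 : ∀ x, ε ≤ ‖x - y‖ → k x ≤ ENNReal.ofReal (C * ε / ‖x - y‖ ^ 2)) :
    ∫⁻ x, k x * φ x ∂μT ≤
      ENNReal.ofReal (8 * C) * η + ENNReal.ofReal (C * ε / δ ^ 2) * ∫⁻ x, φ x ∂μT := by
  set s : ℕ → ℝ := fun n => min (2 ^ n * ε) δ with hs
  have hδ0 : 0 < δ := by linarith
  have hs0 : ∀ n, 0 < s n := fun n => lt_min (by positivity) hδ0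
  set c : ℕ → ℝ≥0∞ := fun n => ENNReal.ofReal (4 * C / ε * (1 / 4) ^ n) with hc
  have hpt : ∀ x, k x ≤ (∑' n, c n * (Metric.closedBall y (s n)).indicator 1 x) +
      ENNReal.ofReal (C * ε / δ ^ 2) := by
    intro x
    rcases lt_or_ge δ ‖x - y‖ with hx | hx
    · refine le_add_left ((hk2 x (hδ.trans hx.le)).trans (ENNReal.ofReal_le_ofReal ?_))
      gcongr
    · refine le_add_right ?_
      have hex : ∃ n : ℕ, ‖x - y‖ ≤ 2 ^ n * ε := by
        obtain ⟨n, hn⟩ := pow_unbounded_of_one_lt (‖x - y‖ / ε) (by norm_num : (1 : ℝ) < 2)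
        exact ⟨n, by rw [div_lt_iff₀ hε] at hn; exact hn.le⟩
      classical
      have hn := Nat.find_spec hex
      have hmin := fun m => Nat.find_min (H := hex) (m := m)
      set n := Nat.find hex
      have hmem : x ∈ Metric.closedBall y (s n) := by
        rw [Metric.mem_closedBall, dist_eq_norm]; exact le_min hn hx
      have hterm : c n * (Metric.closedBall y (s n)).indicator 1 x = c n := by
        rw [indicator_of_mem hmem]; simp
      refine le_trans ?_ (ENNReal.le_tsum n)
      rw [hterm, hc]
      rcases Nat.eq_zero_or_pos n with h0 | h0
      · have : k x ≤ ENNReal.ofReal (C / ε) := by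
          rcases lt_or_ge ‖x - y‖ ε with h1 | h1
          · exact hk1 x h1
          · refine (hk2 x h1).trans (ENNReal.ofReal_le_ofReal ?_)
            have : 0 < ‖x - y‖ := hε.trans_le h1
            rw [div_le_div_iff₀ (by positivity) hε]
            have : ε ^ 2 ≤ ‖x - y‖ ^ 2 := by gcongr
            nlinarith
        refine this.trans (ENNReal.ofReal_le_ofReal ?_)
        rw [h0, pow_zero, mul_one]
        gcongr
        linarith
      · obtain ⟨m, hm⟩ := Nat.exists_eq_add_of_lt h0
        rw [zero_add] at hm
        have h1 := hmin m (by omega)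
        push Not at h1
        have h2 : ε ≤ ‖x - y‖ := by
          refine le_trans ?_ h1.le
          exact le_mul_of_one_le_left hε.le (one_le_pow₀ (by norm_num))
        refine (hk2 x h2).trans (ENNReal.ofReal_le_ofReal ?_)
        calc C * ε / ‖x - y‖ ^ 2 ≤ C * ε / (2 ^ m * ε) ^ 2 := by gcongr
          _ = 4 * C / ε * (1 / 4) ^ n := by
            have : (2 ^ m * ε) ^ 2 = 4 ^ m * ε ^ 2 := by
              rw [mul_pow, ← pow_mul, mul_comm m 2, pow_mul]; norm_num
            rw [this, hm, one_div_pow]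
            field_simp
            ring
  have hmb : ∀ n, MeasurableSet (Metric.closedBall y (s n)) := fun n =>
    Metric.isClosed_closedBall.measurableSet
  calc ∫⁻ x, k x * φ x ∂μT ≤ ∫⁻ x, ((∑' n, c n * (Metric.closedBall y (s n)).indicator φ x) +
        ENNReal.ofReal (C * ε / δ ^ 2) * φ x) ∂μT := by
        refine lintegral_mono fun x => ?_
        refine (mul_le_mul_left (hpt x) _).trans (le_of_eq ?_)
        rw [add_mul, ← ENNReal.tsum_mul_right]
        congr 2
        ext n
        by_cases h : x ∈ Metric.closedBall y (s n) <;> simp [h]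
    _ = (∑' n, c n * ∫⁻ x in Metric.closedBall y (s n), φ x ∂μT) +
        ENNReal.ofReal (C * ε / δ ^ 2) * ∫⁻ x, φ x ∂μT := by
        rw [lintegral_add_right _ (hφ.const_mul _), lintegral_const_mul _ hφ,
          lintegral_tsum fun n => ((hφ.indicator (hmb n)).const_mul _).aemeasurable]
        congr 2
        ext n
        rw [lintegral_const_mul _ (hφ.indicator (hmb n)), lintegral_indicator (hmb n)]
    _ ≤ _ := by
        gcongr
        calc ∑' n, c n * ∫⁻ x in Metric.closedBall y (s n), φ x ∂μT
            ≤ ∑' n, ENNReal.ofReal (4 * C * (1 / 2) ^ n) * η := by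
              refine ENNReal.tsum_le_tsum fun n => ?_
              calc c n * ∫⁻ x in Metric.closedBall y (s n), φ x ∂μT
                  ≤ c n * (η * ENNReal.ofReal (2 ^ n * ε)) := by
                    gcongr
                    refine (hA (s n) (hs0 n) (min_le_right _ _)).trans ?_
                    gcongr
                    exact min_le_left _ _
                _ = _ := by
                    rw [mul_left_comm, hc, ← ENNReal.ofReal_mul (by positivity), mul_comm]
                    congr 2
                    rw [one_div_pow, one_div_pow, show (4 : ℝ) = 2 * 2 by norm_num, mul_pow]
                    field_simp
          _ = ENNReal.ofReal (8 * C) * η := by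
              rw [ENNReal.tsum_mul_right, ← ENNReal.ofReal_tsum_of_nonneg (fun n => by positivity)
                (summable_geometric_two.mul_left _), tsum_mul_left, tsum_geometric_two]
              congr 2; ring

/-- Approximate identities with quadratic decay converge at Lebesgue points. -/
lemma LPt.tendsto {g : Tor → ℂ} (hgm : Measurable g) (hg : Integrable g μT) {y : Tor}
    (hy : LPt g y) {C : ℝ} (hC : 0 ≤ C) {D : ℝ → Tor → ℂ}
    (hk1 : ∀ ε, 0 < ε → ε < 1 → ∀ x, ‖x - y‖ < ε → ‖D ε x‖ ≤ C / ε)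
    (hk2 : ∀ ε, 0 < ε → ε < 1 → ∀ x, ε ≤ ‖x - y‖ → ‖D ε x‖ ≤ C * ε / ‖x - y‖ ^ 2)
    (hDm : ∀ ε, 0 < ε → ε < 1 → AEStronglyMeasurable (D ε) μT)
    (hD1 : ∀ ε, 0 < ε → ε < 1 → ∫ x, D ε x ∂μT = 1) :
    Tendsto (fun ε : ℝ => ∫ x, D ε x * g x ∂μT) (nhdsWithin 0 (Ioi 0)) (nhds (g y)) := by
  set M := ∫⁻ x, ‖g x - g y‖ₑ ∂μT with hM
  have hMt : M ≠ ∞ := (hg.sub (integrable_const (g y))).2.ne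
  have hφ : Measurable fun x => ‖g x - g y‖ₑ := (hgm.sub_const _).enorm
  have key : Tendsto (fun ε : ℝ => ∫⁻ x, ‖D ε x‖ₑ * ‖g x - g y‖ₑ ∂μT)
      (nhdsWithin 0 (Ioi 0)) (nhds 0) := by
    rw [ENNReal.tendsto_nhds_zero]
    intro κ hκ
    obtain ⟨η, hη0, hη⟩ : ∃ η : ℝ≥0∞, 0 < η ∧ ENNReal.ofReal (8 * C) * η ≤ κ / 2 := by
      rcases eq_or_ne κ ∞ with rfl | hκt
      · exact ⟨1, by simp, by rw [ENNReal.top_div_of_ne_top (by simp)]; exact le_top⟩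
      refine ⟨κ / 2 / (ENNReal.ofReal (8 * C) + 1), ?_, ?_⟩
      · refine ENNReal.div_pos (ENNReal.half_pos hκ.ne').ne' (ENNReal.add_ne_top.mpr ⟨ENNReal.ofReal_ne_top, by simp⟩)
      · rw [← mul_div_assoc]
        refine ENNReal.div_le_of_le_mul ?_
        rw [mul_comm]
        gcongr
        exact le_self_add
    have hev := (ENNReal.tendsto_nhds_zero.mp hy) η hη0
    obtain ⟨δ, hδ0, hδ⟩ := mem_nhdsGT_iff_exists_Ioc_subset.mp hev
    have hδ0' : (0 : ℝ) < δ := hδ0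
    have hA : ∀ s : ℝ, 0 < s → s ≤ δ →
        ∫⁻ x in Metric.closedBall y s, ‖g x - g y‖ₑ ∂μT ≤ η * ENNReal.ofReal s := by
      intro s hs hs1
      have : (∫⁻ x in Metric.closedBall y s, ‖g x - g y‖ₑ ∂μT) / ENNReal.ofReal s ≤ η :=
        hδ ⟨hs, hs1⟩
      rwa [ENNReal.div_le_iff (by simpa using hs) ENNReal.ofReal_ne_top] at this
    have hlim : Tendsto (fun ε : ℝ => ENNReal.ofReal (C * ε / δ ^ 2) * M)
        (nhdsWithin 0 (Ioi 0)) (nhds 0) := by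
      have : Tendsto (fun ε : ℝ => C * ε / δ ^ 2) (nhdsWithin 0 (Ioi 0)) (nhds 0) := by
        refine Tendsto.mono_left ?_ nhdsWithin_le_nhds
        have h : Continuous fun ε : ℝ => C * ε / δ ^ 2 := by fun_prop
        simpa using h.tendsto 0
      have := ENNReal.Tendsto.mul_const (b := M) (ENNReal.tendsto_ofReal this) (Or.inr hMt)
      simpa using this
    filter_upwards [(ENNReal.tendsto_nhds_zero.mp hlim) (κ / 2) (ENNReal.half_pos hκ.ne'),
      Ioo_mem_nhdsGT (show (0 : ℝ) < min 1 δ by positivity)] with ε h1 h2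
    have hε1 : ε < 1 := h2.2.trans_le (min_le_left _ _)
    have hεδ : ε ≤ δ := (h2.2.trans_le (min_le_right _ _)).le
    refine (kernel_dyadic hφ y hC h2.1 hεδ hA (k := fun x => ‖D ε x‖ₑ) ?_ ?_).trans ?_
    · intro x hx
      rw [← ofReal_norm]; exact ENNReal.ofReal_le_ofReal (hk1 ε h2.1 hε1 x hx)
    · intro x hx
      rw [← ofReal_norm]; exact ENNReal.ofReal_le_ofReal (hk2 ε h2.1 hε1 x hx)
    · calc _ ≤ κ / 2 + κ / 2 := add_le_add hη h1
        _ = κ := ENNReal.add_halves κ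
  rw [tendsto_iff_edist_tendsto_0]
  refine tendsto_of_tendsto_of_tendsto_of_le_of_le' tendsto_const_nhds key
    (Eventually.of_forall fun _ => zero_le) ?_
  filter_upwards [Ioo_mem_nhdsGT (show (0 : ℝ) < 1 by norm_num)] with ε hε
  have hbd : ∀ x, ‖D ε x‖ ≤ C / ε := by
    intro x
    rcases lt_or_ge ‖x - y‖ ε with h1 | h1
    · exact hk1 ε hε.1 hε.2 x h1
    · refine (hk2 ε hε.1 hε.2 x h1).trans ?_
      have h2 := hε.1
      have : 0 < ‖x - y‖ := h2.trans_le h1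
      rw [div_le_div_iff₀ (by positivity) h2]
      have : ε ^ 2 ≤ ‖x - y‖ ^ 2 := by gcongr
      nlinarith
  have hDi : Integrable (D ε) μT :=
    Integrable.of_bound (hDm ε hε.1 hε.2) (C / ε) (Eventually.of_forall hbd)
  have hDg : Integrable (fun x => D ε x * g x) μT :=
    hg.bdd_mul (hDm ε hε.1 hε.2) (Eventually.of_forall hbd)
  have : (∫ x, D ε x * g x ∂μT) - g y = ∫ x, D ε x * (g x - g y) ∂μT := by
    simp only [mul_sub]
    rw [integral_sub hDg (hDi.mul_const _), integral_mul_const, hD1 ε hε.1 hε.2, one_mul]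
  rw [edist_eq_enorm_sub, this]
  refine (enorm_integral_le_lintegral_enorm _).trans (le_of_eq ?_)
  simp only [enorm_mul]

/-- Quadratic decay of the Poisson kernel. -/
lemma norm_hk_sq_le {ε : ℝ} (hε : 0 < ε) (hε1 : ε < 1) {x y : Tor} (h : ε ≤ ‖x - y‖) :
    (hk (((1 - ε : ℝ) : ℂ) * ee y) (ee x)).re ≤ 2 * Real.pi ^ 2 * ε / ‖x - y‖ ^ 2 := by
  have h1 := half_chord_le (r := 1 - ε) (by linarith) (by linarith) x y
  have h2 := chord_ge x y
  have h0 : 0 < ‖x - y‖ := by linarith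
  have hπ := Real.pi_pos
  rw [re_hk (by linarith) (by linarith)]
  have h3 : ‖x - y‖ / Real.pi ≤ ‖ee x - ((1 - ε : ℝ) : ℂ) * ee y‖ := by
    refine le_trans ?_ h1
    have : ‖x - y‖ / Real.pi = 2 / Real.pi * ‖x - y‖ / 2 := by field_simp
    linarith
  calc (1 - (1 - ε) ^ 2) / ‖ee x - ((1 - ε : ℝ) : ℂ) * ee y‖ ^ 2
      ≤ (2 * ε) / (‖x - y‖ / Real.pi) ^ 2 := by
        gcongr
        nlinarith
    _ = 2 * Real.pi ^ 2 * ε / ‖x - y‖ ^ 2 := by field_simp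

lemma two_le : (2 : ℝ) ≤ 2 * Real.pi ^ 2 := by nlinarith [Real.pi_gt_three]

/-- Fatou's theorem: Poisson integrals converge at Lebesgue points. -/
lemma poisson_tendsto {g : Tor → ℂ} (hgm : Measurable g) (hg : Integrable g μT) {y : Tor}
    (hy : LPt g y) :
    Tendsto (fun ε : ℝ => ∫ x, ((hk (((1 - ε : ℝ) : ℂ) * ee y) (ee x)).re : ℂ) * g x ∂μT)
      (nhdsWithin 0 (Ioi 0)) (nhds (g y)) := by
  refine hy.tendsto hgm hg (C := 2 * Real.pi ^ 2) (by positivity) ?_ ?_ ?_ ?_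
  · intro ε h0 h1 x _
    rw [Complex.norm_real, Real.norm_eq_abs]
    refine (Complex.abs_re_le_norm _).trans ((norm_hk_le (by linarith) (by linarith) x y).trans ?_)
    rw [sub_sub_cancel]
    gcongr
    exact two_le
  · intro ε h0 h1 x hx
    rw [Complex.norm_real, Real.norm_of_nonneg (re_hk_nonneg (by linarith) (by linarith) _ _)]
    exact norm_hk_sq_le h0 h1 hx
  · intro ε h0 h1
    exact (Complex.continuous_ofReal.comp (Complex.continuous_re.comp
      (continuous_hk_left (by linarith) (by linarith) y))).aestronglyMeasurable
  · intro ε h0 h1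
    rw [integral_complex_ofReal, integral_re_hk_left (by linarith) (by linarith)]
    simp

/-- The kernel of the truncated Hilbert transform on the circle: the Herglotz kernel with both
points on the circle, cut off at distance `ε`. -/
noncomputable def tk (ε : ℝ) (y x : Tor) : ℂ :=
  {x : Tor | ε ≤ ‖x - y‖}.indicator (fun x => hk (ee y) (ee x)) x

lemma tk_of_le {ε : ℝ} {x y : Tor} (h : ε ≤ ‖x - y‖) : tk ε y x = hk (ee y) (ee x) :=
  indicator_of_mem (s := {x : Tor | ε ≤ ‖x - y‖}) h _

lemma tk_of_not_le {ε : ℝ} {x y : Tor} (h : ¬ ε ≤ ‖x - y‖) : tk ε y x = 0 :=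
  indicator_of_notMem (s := {x : Tor | ε ≤ ‖x - y‖}) h _

lemma measurable_tk (ε : ℝ) (y : Tor) : Measurable (tk ε y) := by
  refine Measurable.indicator ?_ ?_
  · have h1 := continuous_ee.measurable
    exact (h1.add_const _).div (h1.sub_const _)
  · exact measurableSet_le measurable_const (by fun_prop)

lemma norm_tk_le {ε : ℝ} (hε : 0 < ε) (y x : Tor) : ‖tk ε y x‖ ≤ Real.pi / ε := by
  have hπ := Real.pi_pos
  by_cases h : ε ≤ ‖x - y‖
  · rw [tk_of_le h, hk, norm_div]
    have h2 := chord_ge x y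
    have h3 : ‖ee x + ee y‖ ≤ 2 := (norm_add_le _ _).trans (by simp; norm_num)
    calc _ ≤ 2 / (2 / Real.pi * ε) := by
          gcongr
          exact le_trans (by gcongr) h2
      _ = _ := by field_simp
  · rw [tk_of_not_le h, norm_zero]; positivity

/-- The truncated kernel is odd under the reflection `x ↦ 2y - x`. -/
lemma integral_tk (ε : ℝ) (y : Tor) : ∫ x, tk ε y x ∂μT = 0 := by
  have h := integral_sub_left_eq_self (tk ε y) μT (y + y)
  have h2 : ∀ x, tk ε y (y + y - x) = - tk ε y x := by
    intro x
    have e1 : y + y - x - y = -(x - y) := by abel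
    by_cases hx : ε ≤ ‖x - y‖
    · have hx' : ε ≤ ‖y + y - x - y‖ := by rwa [e1, norm_neg]
      rw [tk_of_le hx, tk_of_le hx', hk, hk,
        ee_sub, ee_add]
      have h1 := ee_ne_zero x
      have h2 := ee_ne_zero y
      have e1 : ee y * ee y * (ee x)⁻¹ + ee y = ee y * (ee x)⁻¹ * (ee x + ee y) := by
        field_simp; ring
      have e2 : ee y * ee y * (ee x)⁻¹ - ee y = ee y * (ee x)⁻¹ * -(ee x - ee y) := by
        field_simp; ring
      rw [e1, e2, mul_div_mul_left _ _ (by simp [h1, h2]), div_neg]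
    · have hx' : ¬ ε ≤ ‖y + y - x - y‖ := by rwa [e1, norm_neg]
      rw [tk_of_not_le hx, tk_of_not_le hx', neg_zero]
  simp only [h2, integral_neg] at h
  have : (2 : ℂ) * ∫ x, tk ε y x ∂μT = 0 := by linear_combination -h
  simpa using this

/-- At a Lebesgue point, the truncated Hilbert transform at scale `ε` and the Herglotz integral at
radius `1 - ε` differ asymptotically by `g y`. -/
lemma herglotz_sub_tendsto {g : Tor → ℂ} (hgm : Measurable g) (hg : Integrable g μT) {y : Tor}
    (hy : LPt g y) :
    Tendsto (fun ε : ℝ => HT (1 - ε) g y - ∫ x, tk ε y x * g x ∂μT)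
      (nhdsWithin 0 (Ioi 0)) (nhds (g y)) := by
  have hπ := Real.pi_pos
  have h := hy.tendsto hgm hg (C := 2 * Real.pi ^ 2) (by positivity)
    (D := fun ε x => hk (((1 - ε : ℝ) : ℂ) * ee y) (ee x) - tk ε y x) ?_ ?_ ?_ ?_
  · refine h.congr' ?_
    filter_upwards [Ioo_mem_nhdsGT (show (0 : ℝ) < 1 by norm_num)] with ε hε
    simp only [sub_mul]
    rw [integral_sub (integrable_hk_mul (by linarith [hε.2]) (by linarith [hε.1]) hg y), HT]
    exact hg.bdd_mul (measurable_tk ε y).aestronglyMeasurable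
      (Eventually.of_forall (norm_tk_le hε.1 y))
  · intro ε h0 h1 x hx
    rw [tk_of_not_le hx.not_ge, sub_zero]
    refine (norm_hk_le (by linarith) (by linarith) x y).trans ?_
    rw [sub_sub_cancel]
    gcongr
    exact two_le
  · intro ε h0 h1 x hx
    rw [tk_of_le hx]
    have h2 := half_chord_le (r := 1 - ε) (by linarith) (by linarith) x y
    have h3 := chord_ge x y
    have h4 : 0 < ‖x - y‖ := by linarith
    have h5 : 0 < 2 / Real.pi * ‖x - y‖ := by positivity
    have h6 : ee x - ee y ≠ 0 := by rw [← norm_pos_iff]; linarith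
    have h7 := ee_sub_ne (r := 1 - ε) (by linarith) (by linarith) x y
    have e : hk (((1 - ε : ℝ) : ℂ) * ee y) (ee x) - hk (ee y) (ee x) =
        2 * ee x * (-(ε : ℂ)) * ee y / ((ee x - ((1 - ε : ℝ) : ℂ) * ee y) * (ee x - ee y)) := by
      rw [hk, hk, div_sub_div _ _ h7 h6]
      congr 1
      push_cast; ring
    rw [e, norm_div, norm_mul, norm_mul, norm_mul, norm_mul, norm_ee, norm_ee, norm_neg,
      Complex.norm_real, Real.norm_of_nonneg h0.le, Complex.norm_ofNat]
    calc _ ≤ 2 * 1 * ε * 1 / ((2 / Real.pi * ‖x - y‖ / 2) * (2 / Real.pi * ‖x - y‖)) := by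
          gcongr
          exact le_trans (by gcongr) h2
      _ = Real.pi ^ 2 * ε / ‖x - y‖ ^ 2 := by field_simp
      _ ≤ _ := by
          gcongr
          nlinarith [sq_nonneg Real.pi]
  · intro ε h0 h1
    exact (continuous_hk_left (by linarith) (by linarith) y).aestronglyMeasurable.sub
      (measurable_tk ε y).aestronglyMeasurable
  · intro ε h0 h1
    rw [integral_sub (integrable_hk_left (by linarith) (by linarith) y),
      integral_hk_left (by linarith) (by linarith), integral_tk, sub_zero]
    exact Integrable.of_bound (measurable_tk ε y).aestronglyMeasurable _
      (Eventually.of_forall (norm_tk_le h0 y))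

/-! ### Boundary functions and the principal value on the circle -/

section boundary
variable {r : ℝ}

/-- The conjugate Herglotz kernel annihilates the positive frequencies. -/
lemma integral_conj_hk_pow (hr : 0 < r) (hr1 : r < 1) (y : Tor) {n : ℕ} (hn : n ≠ 0) :
    ∫ x, (starRingEnd ℂ) (hk (r * ee y) (ee x)) * ee x ^ n ∂μT = 0 := by
  have hr' : (r : ℂ) ≠ 0 := by exact_mod_cast hr.ne'
  have h := mean_value (Φ := fun w => hk w (ee y) * (w / r) ^ n) hr.le ?_
  · rw [zero_div, zero_pow hn, mul_zero] at h
    rw [← h]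
    congr 1; ext x
    rw [conj_hk, mul_div_cancel_left₀ _ hr']
  · apply DifferentiableOn.diffContOnCl
    refine fun w hw => DifferentiableAt.differentiableWithinAt ?_
    have hw' : ‖w‖ ≤ r := by
      have := Metric.closure_ball_subset_closedBall hw
      simpa using this
    have : ee y - w ≠ 0 := by
      intro h0
      have : ‖ee y‖ = ‖w‖ := by rw [sub_eq_zero.mp h0]
      rw [norm_ee] at this; linarith
    unfold hk
    fun_prop (disch := assumption)

/-- `G` is the boundary function of the Herglotz transform of `g`, in the sense that the Herglotz
integral of `g` is the Poisson integral of `G`. -/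
def BdryOf (g G : Tor → ℂ) : Prop :=
  ∀ r : ℝ, 0 < r → r < 1 → ∀ y,
    HT r g y = ∫ x, ((hk (r * ee y) (ee x)).re : ℂ) * G x ∂μT

lemma integrable_re_hk_mul (hr : 0 ≤ r) (hr1 : r < 1) {g : Tor → ℂ} (hg : Integrable g μT)
    (y : Tor) : Integrable (fun x => ((hk (r * ee y) (ee x)).re : ℂ) * g x) μT := by
  refine hg.bdd_mul (c := 2 / (1 - r)) (Complex.continuous_ofReal.comp (Complex.continuous_re.comp
      (continuous_hk_left hr hr1 y))).aestronglyMeasurable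
    (Eventually.of_forall fun x => ?_)
  rw [Complex.norm_real]
  exact (Complex.abs_re_le_norm _).trans (norm_hk_le hr hr1 x y)

lemma BdryOf.add {g h G H : Tor → ℂ} (h1 : BdryOf g G) (h2 : BdryOf h H) (hg : Integrable g μT)
    (hh : Integrable h μT) (hG : Integrable G μT) (hH : Integrable H μT) :
    BdryOf (fun x => g x + h x) (fun x => G x + H x) := by
  intro r hr hr1 y
  rw [HT_add hr.le hr1 hg hh, h1 r hr hr1, h2 r hr hr1]
  simp only [mul_add]
  exact (integral_add (integrable_re_hk_mul hr.le hr1 hG y)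
    (integrable_re_hk_mul hr.le hr1 hH y)).symm

lemma BdryOf.const_mul {g G : Tor → ℂ} (h : BdryOf g G) (c : ℂ) :
    BdryOf (fun x => c * g x) (fun x => c * G x) := by
  intro r hr hr1 y
  rw [HT_const_mul, h r hr hr1, ← integral_const_mul]
  congr 1; ext x; ring

lemma BdryOf.congr {g g' G G' : Tor → ℂ} (h : BdryOf g G) (hg : g' =ᵐ[μT] g) (hG : G' =ᵐ[μT] G) :
    BdryOf g' G' := by
  intro r hr hr1 y
  have e1 : HT r g' y = HT r g y := by
    refine integral_congr_ae ?_
    filter_upwards [hg] with x hx; rw [hx]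
  rw [e1, h r hr hr1]
  refine integral_congr_ae ?_
  filter_upwards [hG] with x hx; rw [hx]

lemma re_eq (z : ℂ) : (z.re : ℂ) = (z + (starRingEnd ℂ) z) / 2 := by
  rw [Complex.add_conj]; push_cast; ring

lemma bdry_pos {n : ℕ} (hn : n ≠ 0) : BdryOf (fun x => ee x ^ n) (fun x => 2 * ee x ^ n) := by
  intro r hr hr1 y
  have h := integral_conj_hk_pow hr hr1 y hn
  have c1 := continuous_hk_left hr.le hr1 y
  have i1 : Integrable (fun x => hk (r * ee y) (ee x) * ee x ^ n) μT :=
    continuous_integrable (c1.mul (by fun_prop))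
  have i2 : Integrable (fun x => (starRingEnd ℂ) (hk (r * ee y) (ee x)) * ee x ^ n) μT :=
    continuous_integrable ((Complex.continuous_conj.comp c1).mul (by fun_prop))
  have e : ∀ x, ((hk (r * ee y) (ee x)).re : ℂ) * (2 * ee x ^ n) =
      hk (r * ee y) (ee x) * ee x ^ n +
        (starRingEnd ℂ) (hk (r * ee y) (ee x)) * ee x ^ n := fun x => by rw [re_eq]; ring
  simp only [e]
  rw [integral_add i1 i2, h, add_zero, HT]

lemma bdry_zero : BdryOf (fun _ => 1) (fun _ => 1) := by
  intro r hr hr1 y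
  simp only [HT, mul_one]
  rw [integral_hk_left hr.le hr1, integral_complex_ofReal, integral_re_hk_left hr.le hr1]
  simp

lemma bdry_neg {n : ℕ} (hn : n ≠ 0) :
    BdryOf (fun x => (starRingEnd ℂ) (ee x ^ n)) (fun _ => 0) := by
  intro r hr hr1 y
  have h := congrArg (starRingEnd ℂ) (integral_conj_hk_pow hr hr1 y hn)
  rw [← integral_conj] at h
  simpa [HT] using h

lemma bdry_fourier (n : ℤ) : ∃ G : Tor → ℂ, Continuous G ∧ BdryOf (fun x => fourier n x) G := by
  rcases lt_trichotomy n 0 with h | h | h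
  · obtain ⟨m, rfl⟩ : ∃ m : ℕ, n = -(m : ℤ) := ⟨n.natAbs, by omega⟩
    refine ⟨fun _ => 0, continuous_const, ?_⟩
    simp only [fourier_neg_eq_ee]
    exact bdry_neg (by omega)
  · subst h
    refine ⟨fun _ => 1, continuous_const, ?_⟩
    simp only [fourier_zero]
    exact bdry_zero
  · obtain ⟨m, rfl⟩ : ∃ m : ℕ, n = (m : ℤ) := ⟨n.natAbs, by omega⟩
    refine ⟨fun x => 2 * ee x ^ m, by fun_prop, ?_⟩
    simp only [fourier_eq_ee]
    exact bdry_pos (by omega)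

lemma ofReal_one_le {p : ℝ} (hp : 1 < p) : 1 ≤ ENNReal.ofReal p := by
  rw [← ENNReal.ofReal_one]; exact ENNReal.ofReal_le_ofReal hp.le

/-- The Herglotz transform controls its boundary function: `G` is the a.e. limit of its Poisson
integrals, so Fatou's lemma applies. -/
lemma BdryOf.norm_le {p : ℝ} (hp : 1 < p) {C : NNReal}
    (hC : ∀ r : ℝ, 0 ≤ r → r < 1 → ∀ g : Tor → ℂ, Measurable g → MemLp g (ENNReal.ofReal p) μT →
      eLpNorm (HT r g) (ENNReal.ofReal p) μT ≤ C * eLpNorm g (ENNReal.ofReal p) μT)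
    {g G : Tor → ℂ} (hgm : Measurable g) (hg : MemLp g (ENNReal.ofReal p) μT) (hGm : Measurable G)
    (hG : Integrable G μT) (h : BdryOf g G) :
    eLpNorm G (ENNReal.ofReal p) μT ≤ C * eLpNorm g (ENNReal.ofReal p) μT := by
  have hgi := integrable_of_memLp hp hg
  set ε : ℕ → ℝ := fun n => 1 / ((n : ℝ) + 2) with hε
  have hε0 : ∀ n, 0 < ε n := fun n => by positivity
  have hε1 : ∀ n, ε n < 1 := fun n => by
    rw [hε]; simp only
    rw [div_lt_one (by positivity)]
    have : (0 : ℝ) ≤ n := by positivity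
    linarith
  have hεl : Tendsto ε atTop (nhdsWithin 0 (Ioi 0)) := by
    refine tendsto_nhdsWithin_iff.mpr ⟨?_, Eventually.of_forall hε0⟩
    have := (tendsto_add_atTop_iff_nat (f := fun n : ℕ => 1 / ((n : ℝ) + 1)) 1).mpr
      tendsto_one_div_add_atTop_nhds_zero_nat
    refine this.congr fun n => ?_
    rw [hε]; push_cast; congr 1; ring
  have hlim : ∀ᵐ y ∂μT, Tendsto (fun n => HT (1 - ε n) g y) atTop (nhds (G y)) := by
    filter_upwards [ae_LPt hG] with y hy
    refine ((poisson_tendsto hGm hG hy).comp hεl).congr fun n => ?_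
    exact (h (1 - ε n) (by linarith [hε1 n]) (by linarith [hε0 n]) y).symm
  refine (Lp.eLpNorm_lim_le_liminf_eLpNorm (fun n => (continuous_HT (by linarith [hε1 n])
    (by linarith [hε0 n]) hgi).aestronglyMeasurable) G hlim).trans ?_
  refine (liminf_le_liminf (v := fun _ => C * eLpNorm g (ENNReal.ofReal p) μT)
    (Eventually.of_forall fun n => ?_)).trans (le_of_eq (liminf_const _))
  exact hC _ (by linarith [hε1 n]) (by linarith [hε0 n]) g hgm hg

/-- Pairing with a continuous function is continuous for `L^p` convergence. -/
lemma tendsto_integral_mul_Lp {p : ℝ} (hp : 1 < p) {k : Tor → ℂ} (hk : Continuous k)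
    {g : ℕ → Lp ℂ (ENNReal.ofReal p) μT} {g' : Lp ℂ (ENNReal.ofReal p) μT}
    (h : Tendsto (fun n => eLpNorm (⇑(g n) - ⇑g') (ENNReal.ofReal p) μT) atTop (nhds 0)) :
    Tendsto (fun n => ∫ x, k x * g n x ∂μT) atTop (nhds (∫ x, k x * g' x ∂μT)) := by
  obtain ⟨K, hK⟩ := (isCompact_range hk).isBounded.exists_norm_le
  have hK' : ∀ x, ‖k x‖ ≤ K := fun x => hK _ (mem_range_self x)
  have hi : ∀ f : Lp ℂ (ENNReal.ofReal p) μT, Integrable (fun x => k x * f x) μT := fun f =>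
    (integrable_of_memLp hp (Lp.memLp f)).bdd_mul hk.aestronglyMeasurable (Eventually.of_forall hK')
  rw [tendsto_iff_edist_tendsto_0]
  have hl := ENNReal.Tendsto.const_mul (a := ENNReal.ofReal K) h (Or.inr ENNReal.ofReal_ne_top)
  rw [mul_zero] at hl
  refine tendsto_of_tendsto_of_tendsto_of_le_of_le tendsto_const_nhds hl
    (fun _ => zero_le) fun n => ?_
  simp only
  rw [edist_eq_enorm_sub, ← integral_sub (hi _) (hi _)]
  calc _ ≤ ∫⁻ x, ‖k x * g n x - k x * g' x‖ₑ ∂μT := enorm_integral_le_lintegral_enorm _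
    _ ≤ ∫⁻ x, ENNReal.ofReal K * ‖(⇑(g n) - ⇑g') x‖ₑ ∂μT := by
        refine lintegral_mono fun x => ?_
        rw [← mul_sub, enorm_mul]
        gcongr
        · rw [← ofReal_norm]; exact ENNReal.ofReal_le_ofReal (hK' x)
        · exact le_rfl
    _ = ENNReal.ofReal K * eLpNorm (⇑(g n) - ⇑g') 1 μT := by
        rw [lintegral_const_mul' _ _ ENNReal.ofReal_ne_top, eLpNorm_one_eq_lintegral_enorm]
    _ ≤ _ := by
        gcongr
        exact eLpNorm_le_eLpNorm_of_exponent_le (ofReal_one_le hp)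
          ((Lp.aestronglyMeasurable _).sub (Lp.aestronglyMeasurable _))

/-- Every `L^p` function has a boundary function in `L^p`: this holds for trigonometric monomials,
and the `L^p` bound lets one pass to limits. -/
lemma exists_bdry {p : ℝ} (hp : 1 < p) (g : Lp ℂ (ENNReal.ofReal p) μT) :
    ∃ G : Lp ℂ (ENNReal.ofReal p) μT, BdryOf g G := by
  obtain ⟨C, hC⟩ := riesz_bound hp
  have : Fact (1 ≤ ENNReal.ofReal p) := ⟨ofReal_one_le hp⟩
  have hI : ∀ f : Lp ℂ (ENNReal.ofReal p) μT, Integrable f μT := fun f =>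
    integrable_of_memLp hp (Lp.memLp f)
  let S : Submodule ℂ (Lp ℂ (ENNReal.ofReal p) μT) :=
    { carrier := {g | ∃ G : Lp ℂ (ENNReal.ofReal p) μT, BdryOf g G}
      add_mem' := by
        rintro a b ⟨A, hA⟩ ⟨B, hB⟩
        exact ⟨A + B, (hA.add hB (hI a) (hI b) (hI A) (hI B)).congr (Lp.coeFn_add _ _)
          (Lp.coeFn_add _ _)⟩
      zero_mem' := by
        refine ⟨0, ?_⟩
        intro r hr hr1 y
        rw [HT, integral_eq_zero_of_ae, integral_eq_zero_of_ae] <;>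
          exact Eventually.of_forall fun x => by simp
      smul_mem' := by
        rintro c a ⟨A, hA⟩
        exact ⟨c • A, (hA.const_mul c).congr (Lp.coeFn_smul _ _) (Lp.coeFn_smul _ _)⟩ }
  have hnorm : ∀ g G : Lp ℂ (ENNReal.ofReal p) μT, BdryOf g G → ‖G‖ ≤ C * ‖g‖ := by
    intro g G h
    have := h.norm_le hp hC (Lp.stronglyMeasurable g).measurable (Lp.memLp g)
      (Lp.stronglyMeasurable G).measurable (hI G)
    rw [Lp.norm_def, Lp.norm_def, ← ENNReal.coe_toReal, ← ENNReal.toReal_mul]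
    exact ENNReal.toReal_mono (ENNReal.mul_ne_top (by simp) (Lp.eLpNorm_ne_top g)) this
  -- Boundary functions of a convergent sequence are Cauchy by `hnorm`, and Poisson and Herglotz
  -- integrals at a fixed interior point are continuous on `L^p`.
  have hclosed : IsClosed (S : Set (Lp ℂ (ENNReal.ofReal p) μT)) := by
    refine IsSeqClosed.isClosed fun gs g hgs hlim => ?_
    choose Gs hGs using hgs
    have hcau : CauchySeq Gs := by
      rw [Metric.cauchySeq_iff]
      intro ε hε
      obtain ⟨N, hN⟩ := Metric.cauchySeq_iff.mp hlim.cauchySeq (ε / (C + 1)) (by positivity)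
      refine ⟨N, fun m hm n hn => ?_⟩
      have h1 := hN m hm n hn
      have h2 : BdryOf (gs m - gs n : Lp ℂ (ENNReal.ofReal p) μT)
          (Gs m - Gs n : Lp ℂ (ENNReal.ofReal p) μT) := by
        have := (hGs m).add ((hGs n).const_mul (-1)) (hI _) ((hI _).const_mul _) (hI _)
          ((hI _).const_mul _)
        refine this.congr ?_ ?_
        · filter_upwards [Lp.coeFn_sub (gs m) (gs n)] with x hx
          rw [hx]; simp [sub_eq_add_neg]
        · filter_upwards [Lp.coeFn_sub (Gs m) (Gs n)] with x hx
          rw [hx]; simp [sub_eq_add_neg]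
      rw [dist_eq_norm] at h1 ⊢
      have h3 := hnorm _ _ h2
      rw [lt_div_iff₀ (by positivity)] at h1
      nlinarith [norm_nonneg (gs m - gs n)]
    obtain ⟨G, hG⟩ := cauchySeq_tendsto_of_complete hcau
    refine ⟨G, fun r hr hr1 y => ?_⟩
    have t1 := tendsto_integral_mul_Lp hp (continuous_hk_left hr.le hr1 y)
      ((Lp.tendsto_Lp_iff_tendsto_eLpNorm' gs g).mp hlim)
    have t2 := tendsto_integral_mul_Lp hp (Complex.continuous_ofReal.comp
      (Complex.continuous_re.comp (continuous_hk_left hr.le hr1 y)))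
      ((Lp.tendsto_Lp_iff_tendsto_eLpNorm' Gs G).mp hG)
    exact tendsto_nhds_unique (t1.congr fun n => hGs n r hr hr1 y) t2
  have htop : (⊤ : Submodule ℂ (Lp ℂ (ENNReal.ofReal p) μT)) ≤ S := by
    rw [← span_fourierLp_closure_eq_top ENNReal.ofReal_ne_top]
    refine Submodule.topologicalClosure_minimal _ ?_ hclosed
    rw [Submodule.span_le]
    rintro _ ⟨n, rfl⟩
    obtain ⟨G, hGc, hG⟩ := bdry_fourier n
    have hGL : MemLp G (ENNReal.ofReal p) μT := by
      obtain ⟨K, hK⟩ := (isCompact_range hGc).isBounded.exists_norm_le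
      exact MemLp.of_bound hGc.aestronglyMeasurable K
        (Eventually.of_forall fun x => hK _ (mem_range_self x))
    exact ⟨hGL.toLp G, hG.congr (coeFn_fourierLp _ n) hGL.coeFn_toLp⟩
  exact htop trivial

/-- M. Riesz's theorem on the circle, with almost everywhere existence of the principal value. The
limit is the boundary function of the Herglotz transform minus the function itself. -/
lemma circle_hilbert {p : ℝ} (hp : 1 < p) :
    ∃ C : NNReal, ∀ g : Tor → ℂ, Measurable g → MemLp g (ENNReal.ofReal p) μT →
      ∃ G : Tor → ℂ, Measurable G ∧
        eLpNorm G (ENNReal.ofReal p) μT ≤ C * eLpNorm g (ENNReal.ofReal p) μT ∧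
        ∀ᵐ y ∂μT, Tendsto (fun ε => ∫ x, tk ε y x * g x ∂μT) (nhdsWithin 0 (Ioi 0))
          (nhds (G y)) := by
  obtain ⟨C, hC⟩ := riesz_bound hp
  refine ⟨C + 1, fun g hgm hg => ?_⟩
  have hgi := integrable_of_memLp hp hg
  obtain ⟨G, hG⟩ := exists_bdry hp (hg.toLp g)
  have hG' : BdryOf g G := hG.congr hg.coeFn_toLp.symm (EventuallyEq.refl _ _)
  have hGm : Measurable G := (Lp.stronglyMeasurable G).measurable
  have hGi := integrable_of_memLp hp (Lp.memLp G)
  refine ⟨fun y => G y - g y, hGm.sub hgm, ?_, ?_⟩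
  · refine (eLpNorm_sub_le hGm.aestronglyMeasurable hgm.aestronglyMeasurable
      (ofReal_one_le hp)).trans ?_
    push_cast
    rw [add_mul, one_mul]
    gcongr
    exact hG'.norm_le hp hC hgm hg hGm hGi
  · filter_upwards [ae_LPt hGi, ae_LPt hgi] with y h1 h2
    refine ((poisson_tendsto hGm hGi h1).sub (herglotz_sub_tendsto hgm hgi h2)).congr' ?_
    filter_upwards [Ioo_mem_nhdsGT (show (0 : ℝ) < 1 by norm_num)] with ε hε
    rw [← hG' (1 - ε) (by linarith [hε.2]) (by linarith [hε.1])]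
    ring

end boundary

/-! ### The unweighted Hilbert transform on the arc -/

/-- The open arc `(α, 2π - α)`, as an interval of arguments. -/
abbrev arc (α : ℝ) : Set ℝ := Ioo α (2 * Real.pi - α)

/-- The truncated Hilbert transform on the arc, of `h` as a function of the argument. -/
noncomputable def TI (α : ℝ) (h : ℝ → ℂ) (τ ε : ℝ) : ℂ :=
  ((1 / (2 * Real.pi) : ℝ) : ℂ) * ∫ θ in arc α \ Ioo (τ - ε) (τ + ε),
    h θ / (Complex.exp (τ * Complex.I) - Complex.exp (θ * Complex.I))

/-- Transplantation of `h` from the arc to the circle, with the factor `e^{-iθ}` that turns the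
Cauchy kernel into the circular Hilbert kernel. -/
noncomputable def toTor (α : ℝ) (h : ℝ → ℂ) (x : Tor) : ℂ :=
  (arc α).indicator h (AddCircle.equivIoc (2 * Real.pi) 0 x) * (ee x)⁻¹

lemma measurable_toTor (α : ℝ) {h : ℝ → ℂ} (hh : Measurable h) : Measurable (toTor α h) := by
  have h1 : Measurable fun x : Tor => (AddCircle.equivIoc (2 * Real.pi) 0 x : ℝ) :=
    measurable_subtype_coe.comp (AddCircle.measurableEquivIoc (2 * Real.pi) 0).measurable
  exact ((hh.indicator measurableSet_Ioo).comp h1).mul continuous_ee.measurable.inv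

lemma toTor_coe (α : ℝ) (h : ℝ → ℂ) {θ : ℝ} (hθ : θ ∈ Ioc 0 (2 * Real.pi)) :
    toTor α h θ = (arc α).indicator h θ * (ee (θ : Tor))⁻¹ := by
  rw [toTor, AddCircle.equivIoc_coe_of_mem (by rwa [zero_add])]

lemma arc_subset {α : ℝ} (hα : 0 < α) : arc α ⊆ Ioc 0 (2 * Real.pi) := fun θ hθ =>
  ⟨hα.trans hθ.1, by linarith [hθ.2]⟩

lemma lintegral_Tor (F : Tor → ℝ≥0∞) :
    ∫⁻ θ in Ioc 0 (2 * Real.pi), F (θ : Tor) = ENNReal.ofReal (2 * Real.pi) * ∫⁻ x, F x ∂μT := by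
  have := AddCircle.lintegral_preimage (2 * Real.pi) 0 F
  rw [zero_add] at this
  rw [this, volume_Tor, lintegral_smul_measure, smul_eq_mul]

lemma integral_Tor (F : Tor → ℂ) :
    ((1 / (2 * Real.pi) : ℝ) : ℂ) * ∫ θ in Ioc 0 (2 * Real.pi), F (θ : Tor) = ∫ x, F x ∂μT := by
  have := AddCircle.integral_preimage (2 * Real.pi) 0 F
  rw [zero_add] at this
  rw [this, volume_Tor, integral_smul_measure, ENNReal.toReal_ofReal Real.two_pi_pos.le,
    Complex.real_smul, ← mul_assoc, ← Complex.ofReal_mul, one_div,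
    inv_mul_cancel₀ Real.two_pi_pos.ne']
  simp

/-- For `ε < α` the truncation at distance `ε` is the same on the circle and on the interval, since
the complementary arc has length `2α`. -/
lemma norm_coe_sub {α ε θ τ : ℝ} (hα : 0 < α) (hαπ : α < Real.pi) (hε : ε < α)
    (hθ : θ ∈ arc α) (hτ : τ ∈ arc α) : ε ≤ ‖(θ : Tor) - (τ : Tor)‖ ↔ ε ≤ |θ - τ| := by
  have hπ := Real.pi_pos
  have h1 : ∀ t : ℝ, |t| ≤ Real.pi → ‖(t : Tor)‖ = |t| := fun t ht => by
    rw [AddCircle.norm_coe_eq_abs_iff _ (by positivity), abs_of_pos Real.two_pi_pos]; linarith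
  rw [← AddCircle.coe_sub]
  rcases le_or_gt |θ - τ| Real.pi with h | h
  · rw [h1 _ h]
  · refine iff_of_true ?_ (by linarith)
    have hlt : |θ - τ| < 2 * Real.pi - 2 * α := by
      rw [abs_lt]; constructor <;> linarith [hθ.1, hθ.2, hτ.1, hτ.2]
    have h2 : ‖((θ - τ : ℝ) : Tor)‖ = ‖((|θ - τ| : ℝ) : Tor)‖ := by
      rcases abs_choice (θ - τ) with h | h <;> rw [h]
      rw [AddCircle.coe_neg, norm_neg]
    have h3 : ((|θ - τ| : ℝ) : Tor) = ((|θ - τ| - 2 * Real.pi : ℝ) : Tor) := by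
      rw [← AddCircle.coe_add_period (2 * Real.pi) (|θ - τ| - 2 * Real.pi), sub_add_cancel]
    have h4 : |(|θ - τ| - 2 * Real.pi)| = 2 * Real.pi - |θ - τ| := by
      rw [abs_of_neg (by linarith)]; ring
    rw [h2, h3, h1 _ (by rw [h4]; linarith), h4]
    linarith

/-- On the circle, `1 / (e^{iτ} - e^{iθ}) = -½ e^{-iθ} (1 + hk (e^{iτ}) (e^{iθ}))`; the first term gives a
bounded functional and the second one the Hilbert transform. -/
lemma TI_eq {α ε τ : ℝ} (hα : 0 < α) (hαπ : α < Real.pi) (hε0 : 0 < ε) (hε : ε < α)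
    (hτ : τ ∈ arc α) {h : ℝ → ℂ} (hg : Integrable (toTor α h) μT) :
    TI α h τ ε = -(1 / 2) *
      ((∫ x, {x : Tor | ε ≤ ‖x - τ‖}.indicator (toTor α h) x ∂μT) +
        ∫ x, tk ε τ x * toTor α h x ∂μT) := by
  set y : Tor := (τ : Tor) with hy
  have hms : MeasurableSet {x : Tor | ε ≤ ‖x - y‖} :=
    measurableSet_le measurable_const (by fun_prop)
  rw [← integral_add (hg.indicator hms) (hg.bdd_mul (measurable_tk ε y).aestronglyMeasurable
    (Eventually.of_forall (norm_tk_le hε0 y))), ← integral_const_mul, ← integral_Tor, TI]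
  congr 1
  have hsub : arc α \ Ioo (τ - ε) (τ + ε) ⊆ Ioc 0 (2 * Real.pi) :=
    sdiff_subset.trans (arc_subset hα)
  have hmd : MeasurableSet (arc α \ Ioo (τ - ε) (τ + ε)) := measurableSet_Ioo.diff measurableSet_Ioo
  rw [← integral_indicator hmd, ← integral_indicator measurableSet_Ioc]
  congr 1
  ext θ
  by_cases hθ : θ ∈ Ioc 0 (2 * Real.pi)
  swap
  · rw [indicator_of_notMem hθ, indicator_of_notMem fun h => hθ (hsub h)]
  rw [indicator_of_mem hθ]
  by_cases hI : θ ∈ arc α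
  swap
  · rw [indicator_of_notMem fun h => hI h.1]
    have h0 : toTor α h θ = 0 := by rw [toTor_coe α h hθ, indicator_of_notMem hI, zero_mul]
    have h1 : {x : Tor | ε ≤ ‖x - y‖}.indicator (toTor α h) θ = 0 := by
      rw [indicator_apply]; simp [h0]
    rw [h0, h1]; simp
  have hg' : toTor α h θ = h θ * (ee (θ : Tor))⁻¹ := by
    rw [toTor_coe α h hθ, indicator_of_mem hI]
  have hiff := norm_coe_sub hα hαπ hε hI hτ
  by_cases hd : ε ≤ |θ - τ|
  · have hmem : θ ∈ arc α \ Ioo (τ - ε) (τ + ε) := by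
      refine ⟨hI, fun h => ?_⟩
      have : |θ - τ| < ε := by rw [abs_lt]; constructor <;> linarith [h.1, h.2]
      linarith
    have hle : ε ≤ ‖(θ : Tor) - y‖ := hiff.mpr hd
    rw [indicator_of_mem hmem, indicator_of_mem (s := {x : Tor | ε ≤ ‖x - y‖}) hle, tk_of_le hle,
      hg', ← ee_coe, ← ee_coe, ← hy, hk]
    have h1 := ee_ne_zero (θ : Tor)
    have h2 : ee (θ : Tor) - ee y ≠ 0 := by
      have := chord_ge (θ : Tor) y
      have h3 : 0 < 2 / Real.pi * ‖(θ : Tor) - y‖ := by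
        have := Real.pi_pos
        have : 0 < ‖(θ : Tor) - y‖ := hε0.trans_le hle
        positivity
      rw [← norm_pos_iff]; linarith
    have h3 : ee y - ee (θ : Tor) ≠ 0 := by
      rw [← neg_sub]; exact neg_ne_zero.mpr h2
    field_simp
    ring
  · have hmem : θ ∉ arc α \ Ioo (τ - ε) (τ + ε) := by
      intro h
      refine h.2 ?_
      push Not at hd
      rw [abs_lt] at hd
      constructor <;> linarith [hd.1, hd.2]
    have hle : ¬ ε ≤ ‖(θ : Tor) - y‖ := fun h => hd (hiff.mp h)
    rw [indicator_of_notMem hmem, indicator_of_notMem (s := {x : Tor | ε ≤ ‖x - y‖}) hle,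
      tk_of_not_le hle]
    simp

lemma ae_ne_Tor (y : Tor) : ∀ᵐ x ∂μT, x ≠ y := by
  rw [muT_eq]
  refine Measure.ae_smul_measure ?_ _
  have : volume ({y} : Set Tor) = 0 := by
    have := AddCircle.volume_closedBall (2 * Real.pi) (x := y) 0
    simpa [Real.pi_pos.le] using this
  exact measure_eq_zero_iff_ae_notMem.mp this

lemma tendsto_trunc {g : Tor → ℂ} (hg : Integrable g μT) (y : Tor) :
    Tendsto (fun ε : ℝ => ∫ x, {x : Tor | ε ≤ ‖x - y‖}.indicator g x ∂μT) (nhdsWithin 0 (Ioi 0))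
      (nhds (∫ x, g x ∂μT)) := by
  refine tendsto_integral_filter_of_dominated_convergence (fun x => ‖g x‖) ?_ ?_ hg.norm ?_
  · refine Eventually.of_forall fun ε => ?_
    exact hg.1.indicator (measurableSet_le measurable_const (by fun_prop))
  · exact Eventually.of_forall fun ε => Eventually.of_forall fun x => norm_indicator_le_norm_self _ _
  · filter_upwards [ae_ne_Tor y] with x hx
    have h0 : 0 < ‖x - y‖ := norm_pos_iff.mpr (sub_ne_zero.mpr hx)
    refine tendsto_const_nhds.congr' ?_
    filter_upwards [Ioo_mem_nhdsGT h0] with ε hε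
    rw [indicator_of_mem (s := {x : Tor | ε ≤ ‖x - y‖}) hε.2.le]

lemma lintegral_toTor {α : ℝ} (hα : 0 < α) {p : ℝ} (hp : 0 < p) (h : ℝ → ℂ) :
    ENNReal.ofReal (2 * Real.pi) * ∫⁻ x, ‖toTor α h x‖ₑ ^ p ∂μT = ∫⁻ θ in arc α, ‖h θ‖ₑ ^ p := by
  rw [← lintegral_Tor, ← lintegral_indicator measurableSet_Ioc,
    ← lintegral_indicator measurableSet_Ioo]
  congr 1; ext θ
  by_cases hθ : θ ∈ Ioc 0 (2 * Real.pi)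
  · rw [indicator_of_mem hθ, toTor_coe α h hθ]
    have hn : ‖(ee (θ : Tor))⁻¹‖ₑ = 1 := by rw [← ofReal_norm]; simp
    rw [enorm_mul, hn, mul_one]
    by_cases hI : θ ∈ arc α <;> simp [hI, hp]
  · rw [indicator_of_notMem hθ, indicator_of_notMem fun h => hθ (arc_subset hα h)]

/-- The unweighted `L^p` theory of the Hilbert transform on the arc. -/
lemma arc_hilbert {α : ℝ} (hα : 0 < α) (hαπ : α < Real.pi) {p : ℝ} (hp : 1 < p) :
    ∃ C : NNReal, ∀ h : ℝ → ℂ, Measurable h → ∫⁻ θ in arc α, ‖h θ‖ₑ ^ p ≠ ∞ →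
      ∃ H : ℝ → ℂ, Measurable H ∧
        (∀ᵐ τ ∂volume.restrict (arc α),
          Tendsto (TI α h τ) (nhdsWithin 0 (Ioi 0)) (nhds (H τ))) ∧
        ∫⁻ τ in arc α, ‖H τ‖ₑ ^ p ≤ C * ∫⁻ θ in arc α, ‖h θ‖ₑ ^ p := by
  have hp0 : 0 < p := by linarith
  have hπ0 : ENNReal.ofReal (2 * Real.pi) ≠ 0 := by simp [Real.pi_pos]
  obtain ⟨C, hC⟩ := circle_hilbert hp
  refine ⟨(1 + C) ^ p, fun h hh hfin => ?_⟩
  set g := toTor α h with hg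
  have hgm : Measurable g := measurable_toTor α hh
  have hlg := lintegral_toTor hα hp0 h
  have hgL : MemLp g (ENNReal.ofReal p) μT := by
    refine ⟨hgm.aestronglyMeasurable, ?_⟩
    rw [eLpNorm_ofReal_eq hp0]
    refine ENNReal.rpow_lt_top_of_nonneg (by positivity) fun ht => hfin ?_
    rw [← hlg, ht, ENNReal.mul_top hπ0]
  have hgi := integrable_of_memLp hp hgL
  obtain ⟨G, hGm, hGn, hGt⟩ := hC g hgm hgL
  set K : Tor → ℂ := fun y => -(1 / 2) * ((∫ x, g x ∂μT) + G y) with hK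
  have hKm : Measurable K := (hGm.const_add _).const_mul _
  have hcm : Measurable ((↑) : ℝ → Tor) := AddCircle.measurable_mk'
  refine ⟨fun τ => K τ, hKm.comp hcm, ?_, ?_⟩
  · have hGt' : ∀ᵐ y ∂(volume : Measure Tor), Tendsto (fun ε => ∫ x, tk ε y x * g x ∂μT)
        (nhdsWithin 0 (Ioi 0)) (nhds (G y)) := by
      rw [volume_Tor]; exact Measure.ae_smul_measure hGt _
    have h1 := (AddCircle.measurePreserving_mk (2 * Real.pi) 0).quasiMeasurePreserving.ae hGt'
    rw [zero_add] at h1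
    have h2 := ae_restrict_of_ae_restrict_of_subset (arc_subset hα) h1
    filter_upwards [h2, ae_restrict_mem measurableSet_Ioo] with τ hτ hτI
    refine (((tendsto_trunc hgi (τ : Tor)).add hτ).const_mul (-(1 / 2))).congr' ?_
    filter_upwards [Ioo_mem_nhdsGT hα] with ε hε
    exact (TI_eq hα hαπ hε.1 hε.2 hτI hgi).symm
  · have hKn : eLpNorm K (ENNReal.ofReal p) μT ≤ (1 + C) * eLpNorm g (ENNReal.ofReal p) μT := by
      have e : K = (-(1 / 2) : ℂ) • ((fun _ => ∫ x, g x ∂μT) + G) := rfl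
      rw [e, eLpNorm_const_smul]
      have hs : ‖(-(1 / 2) : ℂ)‖ₑ ≤ 1 := by
        rw [← ofReal_norm, ← ENNReal.ofReal_one]
        refine ENNReal.ofReal_le_ofReal ?_
        norm_num
      refine (mul_le_of_le_one_left' hs).trans ((eLpNorm_add_le aestronglyMeasurable_const
        hGm.aestronglyMeasurable (ofReal_one_le hp)).trans ?_)
      rw [add_mul, one_mul]
      gcongr
      rw [eLpNorm_const _ (by simpa using hp0) (NeZero.ne _)]
      simp only [measure_univ, ENNReal.one_rpow, mul_one]
      refine (enorm_integral_le_lintegral_enorm _).trans ?_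
      rw [← eLpNorm_one_eq_lintegral_enorm]
      exact eLpNorm_le_eLpNorm_of_exponent_le (ofReal_one_le hp) hgm.aestronglyMeasurable
    rw [eLpNorm_ofReal_eq hp0, eLpNorm_ofReal_eq hp0] at hKn
    have hKn' := ENNReal.rpow_le_rpow hKn hp0.le
    rw [ENNReal.mul_rpow_of_nonneg _ _ hp0.le, ← ENNReal.rpow_mul, ← ENNReal.rpow_mul,
      one_div_mul_cancel hp0.ne', ENNReal.rpow_one, ENNReal.rpow_one] at hKn'
    calc ∫⁻ τ in arc α, ‖K τ‖ₑ ^ p ≤ ∫⁻ τ in Ioc 0 (2 * Real.pi), ‖K τ‖ₑ ^ p :=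
          lintegral_mono_set (arc_subset hα)
      _ = ENNReal.ofReal (2 * Real.pi) * ∫⁻ x, ‖K x‖ₑ ^ p ∂μT :=
          lintegral_Tor fun x => ‖K x‖ₑ ^ p
      _ ≤ ENNReal.ofReal (2 * Real.pi) * ((1 + C) ^ p * ∫⁻ x, ‖g x‖ₑ ^ p ∂μT) := by gcongr
      _ = (1 + C) ^ p * ∫⁻ θ in arc α, ‖h θ‖ₑ ^ p := by rw [← hlg]; ring
      _ = _ := by
          rw [ENNReal.coe_rpow_of_nonneg _ hp0.le]; push_cast; rfl

/-! ### The commutator with a power weight -/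

/-- The distance from `θ` to the endpoints of the arc (negative outside the arc). -/
noncomputable def bd (α θ : ℝ) : ℝ := min (θ - α) (2 * Real.pi - α - θ)

lemma continuous_bd (α : ℝ) : Continuous (bd α) := by unfold bd; fun_prop

lemma bd_pos {α θ : ℝ} (h : θ ∈ arc α) : 0 < bd α θ :=
  lt_min (by linarith [h.1]) (by linarith [h.2])

lemma bd_le (α θ : ℝ) : bd α θ ≤ Real.pi - α := by
  unfold bd
  rcases le_total θ Real.pi with h | h
  · exact (min_le_left _ _).trans (by linarith)
  · exact (min_le_right _ _).trans (by linarith)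

lemma abs_bd_sub_le (α θ τ : ℝ) : |bd α θ - bd α τ| ≤ |θ - τ| := by
  refine (abs_min_sub_min_le_max _ _ _ _).trans (max_le ?_ ?_)
  · rw [show θ - α - (τ - α) = θ - τ by ring]
  · rw [show 2 * Real.pi - α - θ - (2 * Real.pi - α - τ) = -(θ - τ) by ring, abs_neg]

/-- Each of the two endpoints contributes one integral over the half-line. -/
lemma lintegral_bd_le {α : ℝ} {φ : ℝ → ℝ≥0∞} (hφ : Measurable φ) :
    ∫⁻ θ in arc α, φ (bd α θ) ≤ 2 * ∫⁻ y in Ioi 0, φ y := by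
  calc ∫⁻ θ in arc α, φ (bd α θ)
      ≤ ∫⁻ θ in arc α, (φ (θ - α) + φ (2 * Real.pi - α - θ)) := by
        refine lintegral_mono fun θ => ?_
        rcases min_choice (θ - α) (2 * Real.pi - α - θ) with h | h <;> rw [bd, h]
        · exact le_self_add
        · exact le_add_self
    _ = (∫⁻ θ in arc α, φ (θ - α)) + ∫⁻ θ in arc α, φ (2 * Real.pi - α - θ) :=
        lintegral_add_left (hφ.comp (measurable_id.sub_const _)) _
    _ ≤ (∫⁻ y in Ioi 0, φ y) + ∫⁻ y in Ioi 0, φ y := by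
        refine add_le_add ?_ ?_
        · rw [← lintegral_indicator measurableSet_Ioo, ← lintegral_indicator measurableSet_Ioi,
            ← lintegral_sub_right_eq_self ((Ioi 0).indicator φ) α]
          refine lintegral_mono fun θ => ?_
          by_cases h : θ ∈ arc α
          · rw [indicator_of_mem h, indicator_of_mem (by simpa using h.1)]
          · rw [indicator_of_notMem h]; exact zero_le
        · rw [← lintegral_indicator measurableSet_Ioo, ← lintegral_indicator measurableSet_Ioi,
            ← lintegral_sub_left_eq_self ((Ioi 0).indicator φ) (2 * Real.pi - α)]
          refine lintegral_mono fun θ => ?_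
          by_cases h : θ ∈ arc α
          · rw [indicator_of_mem h, indicator_of_mem (by simpa using h.2)]
          · rw [indicator_of_notMem h]; exact zero_le
    _ = _ := (two_mul _).symm

/-- The scale-invariant integral behind both Schur conditions. -/
lemma lintegral_max_le {a b x : ℝ} (ha : -1 < a) (hab : a + b < -1) (hx : 0 < x) :
    ∫⁻ y in Ioi 0, ENNReal.ofReal (y ^ a * max x y ^ b) ≤
      ENNReal.ofReal (1 / (a + 1) - 1 / (a + b + 1)) * ENNReal.ofReal (x ^ (a + b + 1)) := by
  have h1 : ∫⁻ y in Ioc 0 x, ENNReal.ofReal (y ^ a * max x y ^ b) =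
      ENNReal.ofReal (x ^ (a + b + 1) / (a + 1)) := by
    have hI : IntegrableOn (fun y : ℝ => y ^ a * x ^ b) (Ioc 0 x) :=
      (((intervalIntegral.intervalIntegrable_rpow' ha (a := 0) (b := x)).1).mul_const _)
    have e : ∫⁻ y in Ioc 0 x, ENNReal.ofReal (y ^ a * max x y ^ b) =
        ∫⁻ y in Ioc 0 x, ENNReal.ofReal (y ^ a * x ^ b) := by
      refine setLIntegral_congr_fun measurableSet_Ioc fun y hy => ?_
      rw [max_eq_left hy.2]
    rw [e, ← ofReal_integral_eq_lintegral_ofReal hI]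
    · congr 1
      rw [integral_mul_const, ← intervalIntegral.integral_of_le hx.le,
        integral_rpow (Or.inl ha), Real.zero_rpow (by linarith), sub_zero,
        show a + b + 1 = (a + 1) + b by ring, Real.rpow_add hx (a + 1)]
      ring
    · filter_upwards [ae_restrict_mem measurableSet_Ioc] with y hy
      exact mul_nonneg (Real.rpow_nonneg hy.1.le _) (Real.rpow_nonneg hx.le _)
  have h2 : ∫⁻ y in Ioi x, ENNReal.ofReal (y ^ a * max x y ^ b) =
      ENNReal.ofReal (-x ^ (a + b + 1) / (a + b + 1)) := by
    have e : ∫⁻ y in Ioi x, ENNReal.ofReal (y ^ a * max x y ^ b) =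
        ∫⁻ y in Ioi x, ENNReal.ofReal (y ^ (a + b)) := by
      refine setLIntegral_congr_fun measurableSet_Ioi fun y hy => ?_
      rw [max_eq_right (le_of_lt hy), Real.rpow_add (hx.trans hy)]
    rw [e, ← ofReal_integral_eq_lintegral_ofReal (integrableOn_Ioi_rpow_of_lt hab hx),
      integral_Ioi_rpow_of_lt hab hx]
    filter_upwards [ae_restrict_mem measurableSet_Ioi] with y hy
    exact Real.rpow_nonneg (hx.trans hy).le _
  rw [← Ioc_union_Ioi_eq_Ioi hx.le,
    lintegral_union measurableSet_Ioi (Ioc_disjoint_Ioi le_rfl), h1, h2]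
  have hX := Real.rpow_pos_of_pos hx (a + b + 1)
  have ha' : 0 < a + 1 := by linarith
  have hab' : 0 < -(a + b + 1) := by linarith
  rw [← ENNReal.ofReal_add (by positivity), ← ENNReal.ofReal_mul]
  · refine ENNReal.ofReal_le_ofReal (le_of_eq ?_)
    ring
  · have := one_div_pos.mpr ha'
    have h3 := one_div_pos.mpr hab'
    rw [one_div_neg_eq_neg_one_div] at h3
    linarith
  · rw [neg_div, ← div_neg]; positivity

lemma lintegral_bd_max_le {α a b x : ℝ} (ha : -1 < a) (hab : a + b < -1) (hx : 0 < x) :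
    ∫⁻ θ in arc α, ENNReal.ofReal (bd α θ ^ a * max x (bd α θ) ^ b) ≤
      2 * ENNReal.ofReal (1 / (a + 1) - 1 / (a + b + 1)) * ENNReal.ofReal (x ^ (a + b + 1)) := by
  rw [mul_assoc]
  refine (lintegral_bd_le (φ := fun y => ENNReal.ofReal (y ^ a * max x y ^ b))
    (by fun_prop)).trans ?_
  gcongr
  exact lintegral_max_le ha hab hx

/-- A majorant of the kernel of the commutator of the Hilbert transform with multiplication by
`bd α ^ (-s)`. -/
noncomputable def CK (α s τ θ : ℝ) : ℝ≥0∞ :=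
  ENNReal.ofReal (bd α τ ^ (-s) * max (bd α τ) (bd α θ) ^ (s - 1))

lemma measurable_CK (α s : ℝ) : Measurable (Function.uncurry (CK α s)) := by
  have h1 : Measurable fun z : ℝ × ℝ => bd α z.1 := (continuous_bd α).measurable.comp measurable_fst
  have h2 : Measurable fun z : ℝ × ℝ => bd α z.2 := (continuous_bd α).measurable.comp measurable_snd
  have : Measurable fun z : ℝ × ℝ =>
      bd α z.1 ^ (-s) * max (bd α z.1) (bd α z.2) ^ (s - 1) :=
    (h1.pow_const _).mul ((h1.max h2).pow_const _)
  exact this.ennreal_ofReal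

/-- The commutator kernel is bounded on `L^p`, by Schur's test with a power of `bd α`. -/
lemma CK_bound (α : ℝ) {p : ℝ} (hp : 1 < p) :
    ∃ C : NNReal, ∀ g : ℝ → ℝ≥0∞, Measurable g →
      ∫⁻ τ in arc α, (∫⁻ θ in arc α, CK α (1 / (2 * p)) τ θ * g θ) ^ p ≤
        C * ∫⁻ θ in arc α, g θ ^ p := by
  set q := p.conjExponent with hq
  have hpq : p.HolderConjugate q := Real.HolderConjugate.conjExponent hp
  have hp0 : 0 < p := hpq.pos
  have hq0 : 0 < q := hpq.symm.pos
  have hsum : 1 / p + 1 / q = 1 := by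
    have := hpq.inv_add_inv_eq_one; simpa only [one_div] using this
  have hip : 0 < 1 / p := by positivity
  have hiq : 0 < 1 / q := by positivity
  set s : ℝ := 1 / (2 * p) with hs
  have hs2 : 2 * s = 1 / p := by rw [hs]; field_simp
  have hbm := (continuous_bd α).measurable
  set A : ℝ≥0∞ := 2 * ENNReal.ofReal (1 / (-(1 / p) + 1) - 1 / (-(1 / p) + (s - 1) + 1)) with hA
  set B : ℝ≥0∞ := 2 * ENNReal.ofReal
    (1 / (-(1 / q) - s + 1) - 1 / (-(1 / q) - s + (s - 1) + 1)) with hB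
  have hAt : A ≠ ∞ := by simp [hA, ENNReal.mul_eq_top]
  have hBt : B ≠ ∞ := by simp [hB, ENNReal.mul_eq_top]
  have hCt : A ^ (p - 1) * B ≠ ∞ :=
    ENNReal.mul_ne_top (ENNReal.rpow_ne_top_of_nonneg (by linarith) hAt) hBt
  refine ⟨(A ^ (p - 1) * B).toNNReal, fun g hg => ?_⟩
  rw [ENNReal.coe_toNNReal hCt]
  -- With this exponent, `u ^ p` and `u ^ q` are `bd α ^ (-1/q)` and `bd α ^ (-1/p)`, and all the
  -- integrals in the test converge because `s < 1 / p`.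
  set u : ℝ → ℝ≥0∞ := fun θ => ENNReal.ofReal (bd α θ ^ (-(1 / (p * q)))) with hu
  have hup : ∀ θ ∈ arc α, u θ ^ p = ENNReal.ofReal (bd α θ ^ (-(1 / q))) := fun θ hθ => by
    have h0 := bd_pos hθ
    simp only [hu]
    rw [ENNReal.ofReal_rpow_of_nonneg (by positivity) hp0.le, ← Real.rpow_mul h0.le]
    congr 2; field_simp
  have huq : ∀ θ ∈ arc α, u θ ^ q = ENNReal.ofReal (bd α θ ^ (-(1 / p))) := fun θ hθ => by
    have h0 := bd_pos hθ
    simp only [hu]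
    rw [ENNReal.ofReal_rpow_of_nonneg (by positivity) hq0.le, ← Real.rpow_mul h0.le]
    congr 2; field_simp
  refine schur_test (μ := volume.restrict (arc α)) (u := u) hpq (measurable_CK α s)
    (hbm.pow_const _).ennreal_ofReal ?_ (Eventually.of_forall fun y => ENNReal.ofReal_ne_top)
    ?_ ?_ hg
  · filter_upwards [ae_restrict_mem measurableSet_Ioo] with θ hθ
    have h0 := bd_pos hθ
    have : 0 < bd α θ ^ (-(1 / (p * q))) := by positivity
    simpa [hu] using this
  · filter_upwards [ae_restrict_mem measurableSet_Ioo] with τ hτ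
    have h0 := bd_pos hτ
    have e : ∫⁻ θ in arc α, CK α s τ θ * u θ ^ q = ENNReal.ofReal (bd α τ ^ (-s)) *
        ∫⁻ θ in arc α, ENNReal.ofReal (bd α θ ^ (-(1 / p)) * max (bd α τ) (bd α θ) ^ (s - 1)) := by
      rw [← lintegral_const_mul _ (by fun_prop)]
      refine setLIntegral_congr_fun measurableSet_Ioo fun θ hθ => ?_
      have h1 := bd_pos hθ
      rw [huq θ hθ, CK, ← ENNReal.ofReal_mul (by positivity), ← ENNReal.ofReal_mul (by positivity)]
      congr 1; ring
    rw [e, huq τ hτ]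
    calc _ ≤ ENNReal.ofReal (bd α τ ^ (-s)) *
          (A * ENNReal.ofReal (bd α τ ^ (-(1 / p) + (s - 1) + 1))) := by
          gcongr
          exact lintegral_bd_max_le (by linarith) (by linarith) h0
      _ = A * ENNReal.ofReal (bd α τ ^ (-s) * bd α τ ^ (-(1 / p) + (s - 1) + 1)) := by
          rw [ENNReal.ofReal_mul (by positivity)]; ring
      _ = _ := by
          rw [← Real.rpow_add h0]; congr 3; ring
  · filter_upwards [ae_restrict_mem measurableSet_Ioo] with θ hθ
    have h0 := bd_pos hθ
    have e : ∫⁻ τ in arc α, CK α s τ θ * u τ ^ p =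
        ∫⁻ τ in arc α, ENNReal.ofReal
          (bd α τ ^ (-(1 / q) - s) * max (bd α θ) (bd α τ) ^ (s - 1)) := by
      refine setLIntegral_congr_fun measurableSet_Ioo fun τ hτ => ?_
      have h1 := bd_pos hτ
      rw [hup τ hτ, CK, ← ENNReal.ofReal_mul (by positivity), max_comm, sub_eq_add_neg (-(1 / q)),
        Real.rpow_add h1]
      congr 1; ring
    rw [e, hup θ hθ]
    refine (lintegral_bd_max_le (by linarith) (by linarith) h0).trans (le_of_eq ?_)
    rw [hB]; congr 3; ring

lemma rpow_neg_sub_le_aux {a b s : ℝ} (ha : 0 < a) (hab : a ≤ b) (hs0 : 0 ≤ s) (hs1 : s ≤ 1) :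
    |a ^ (-s) - b ^ (-s)| ≤ |a - b| * (a ^ (-s) * max a b ^ (s - 1) * b ^ (-s)) := by
  have hb := ha.trans_le hab
  have h1 : b ^ (-s) ≤ a ^ (-s) := Real.rpow_le_rpow_of_nonpos ha hab (by linarith)
  have h2 : a ^ (1 - s) ≤ b ^ (1 - s) := Real.rpow_le_rpow ha.le hab (by linarith)
  rw [abs_of_nonneg (by linarith), abs_of_nonpos (by linarith), max_eq_right hab, mul_assoc,
    ← Real.rpow_add hb, show s - 1 + -s = -1 by ring, Real.rpow_neg_one]
  rw [sub_eq_add_neg 1 s, Real.rpow_add ha, Real.rpow_add hb, Real.rpow_one, Real.rpow_one] at h2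
  have h3 : a * a ^ (-s) * b⁻¹ ≤ b ^ (-s) := by
    rw [← div_eq_mul_inv, div_le_iff₀ hb]; linarith
  have h4 : b * b⁻¹ = 1 := mul_inv_cancel₀ hb.ne'
  have h5 : -(a - b) * (a ^ (-s) * b⁻¹) = a ^ (-s) * (b * b⁻¹) - a * a ^ (-s) * b⁻¹ := by ring
  rw [h5, h4]; linarith

lemma rpow_neg_sub_le {a b s : ℝ} (ha : 0 < a) (hb : 0 < b) (hs0 : 0 ≤ s) (hs1 : s ≤ 1) :
    |a ^ (-s) - b ^ (-s)| ≤ |a - b| * (a ^ (-s) * max a b ^ (s - 1) * b ^ (-s)) := by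
  rcases le_total a b with h | h
  · exact rpow_neg_sub_le_aux ha h hs0 hs1
  · have := rpow_neg_sub_le_aux hb h hs0 hs1
    rw [abs_sub_comm, abs_sub_comm a b, max_comm]
    linarith

/-- Chords of the arc are comparable to distances of arguments; the constant degenerates as `α → 0`,
where the two ends of the arc meet. -/
lemma chord_arc {α θ τ : ℝ} (hα : 0 < α) (hαπ : α < Real.pi) (hθ : θ ∈ arc α) (hτ : τ ∈ arc α) :
    α / (2 * Real.pi ^ 2) * |θ - τ| ≤
      ‖Complex.exp (τ * Complex.I) - Complex.exp (θ * Complex.I)‖ := by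
  have hπ := Real.pi_pos
  have h1 := chord_ge (τ : Tor) (θ : Tor)
  rw [ee_coe, ee_coe, norm_sub_rev (τ : Tor)] at h1
  have hlt : |θ - τ| < 2 * Real.pi := by
    rw [abs_lt]; constructor <;> linarith [hθ.1, hθ.2, hτ.1, hτ.2]
  -- A multiple of `|θ - τ|` small enough to lie below `α`, where the two distances agree.
  have h2 : α / (4 * Real.pi) * |θ - τ| < α := by
    rw [div_mul_eq_mul_div, div_lt_iff₀ (by positivity)]
    nlinarith
  have h3 : α / (4 * Real.pi) * |θ - τ| ≤ |θ - τ| := by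
    refine mul_le_of_le_one_left (abs_nonneg _) ?_
    rw [div_le_one (by positivity)]; linarith
  have h4 := (norm_coe_sub hα hαπ h2 hθ hτ).mpr h3
  refine le_trans (le_of_eq ?_) ((mul_le_mul_of_nonneg_left h4
    (by positivity : 0 ≤ 2 / Real.pi)).trans h1)
  field_simp
  ring

/-- The multiplier `bd α ^ (-s)`, whose `p`-th power is comparable to the weight if `s = 1/(2p)`. -/
noncomputable def mw (α s θ : ℝ) : ℝ := bd α θ ^ (-s)

lemma measurable_mw (α s : ℝ) : Measurable (mw α s) :=
  (continuous_bd α).measurable.pow_const _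

/-- The pointwise bound of the commutator kernel. -/
lemma kernel_comm_le {α s θ τ : ℝ} (hα : 0 < α) (hαπ : α < Real.pi) (hs0 : 0 ≤ s) (hs1 : s ≤ 1)
    (hθ : θ ∈ arc α) (hτ : τ ∈ arc α) (hne : θ ≠ τ) (z : ℂ) :
    ‖((mw α s τ : ℂ) * z - mw α s θ * z) /
        (Complex.exp (τ * Complex.I) - Complex.exp (θ * Complex.I))‖ₑ ≤
      ENNReal.ofReal (2 * Real.pi ^ 2 / α) * (CK α s τ θ * ‖(mw α s θ : ℂ) * z‖ₑ) := by
  have hπ := Real.pi_pos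
  have h1 := chord_arc hα hαπ hθ hτ
  have hbθ := bd_pos hθ
  have hbτ := bd_pos hτ
  have h0 : 0 < |θ - τ| := abs_pos.mpr (sub_ne_zero.mpr hne)
  have h0' : 0 < α / (2 * Real.pi ^ 2) * |θ - τ| := by positivity
  have h2 := rpow_neg_sub_le hbτ hbθ hs0 hs1
  have h3 := abs_bd_sub_le α τ θ
  have hm : 0 ≤ mw α s θ := Real.rpow_nonneg hbθ.le _
  have hk : 0 ≤ bd α τ ^ (-s) * max (bd α τ) (bd α θ) ^ (s - 1) := by positivity
  rw [← ofReal_norm, ← ofReal_norm ((mw α s θ : ℂ) * z), CK, ← ENNReal.ofReal_mul hk,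
    ← ENNReal.ofReal_mul (by positivity)]
  refine ENNReal.ofReal_le_ofReal ?_
  rw [← sub_mul, norm_div, norm_mul, norm_mul, ← Complex.ofReal_sub, Complex.norm_real,
    Complex.norm_real, Real.norm_eq_abs, Real.norm_eq_abs, abs_of_nonneg hm]
  rw [div_le_iff₀ (h0'.trans_le h1)]
  rw [abs_sub_comm τ θ] at h3
  set k := bd α τ ^ (-s) * max (bd α τ) (bd α θ) ^ (s - 1) with hk'
  have h4 : |mw α s τ - mw α s θ| ≤ |θ - τ| * (k * mw α s θ) :=
    h2.trans (mul_le_mul_of_nonneg_right h3 (by positivity))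
  calc |mw α s τ - mw α s θ| * ‖z‖ ≤ |θ - τ| * (k * mw α s θ) * ‖z‖ := by gcongr
    _ = 2 * Real.pi ^ 2 / α * (k * (mw α s θ * ‖z‖)) * (α / (2 * Real.pi ^ 2) * |θ - τ|) := by
        field_simp
    _ ≤ _ := by gcongr

lemma integrableOn_trunc {α : ℝ} (hα : 0 < α) (hαπ : α < Real.pi) {h : ℝ → ℂ}
    (hh : IntegrableOn h (arc α)) {τ ε : ℝ} (hε : 0 < ε) (hτ : τ ∈ arc α) :
    IntegrableOn (fun θ => h θ / (Complex.exp (τ * Complex.I) - Complex.exp (θ * Complex.I)))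
      (arc α \ Ioo (τ - ε) (τ + ε)) := by
  have hmd : MeasurableSet (arc α \ Ioo (τ - ε) (τ + ε)) := measurableSet_Ioo.diff measurableSet_Ioo
  have hπ := Real.pi_pos
  simp only [div_eq_mul_inv]
  refine (hh.mono_set sdiff_subset).mul_bdd (c := (α / (2 * Real.pi ^ 2) * ε)⁻¹)
    (by fun_prop) ?_
  filter_upwards [ae_restrict_mem hmd] with θ hθ
  have hd : ε ≤ |θ - τ| := by
    by_contra hc
    push Not at hc
    rw [abs_lt] at hc
    exact hθ.2 ⟨by linarith, by linarith⟩
  rw [norm_inv]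
  have := chord_arc hα hαπ hθ.1 hτ
  refine inv_anti₀ (by positivity) (le_trans ?_ this)
  gcongr

/-- Commuting the truncated transform with the multiplier costs at most the operator `CK`. -/
lemma TI_comm_le {α s : ℝ} (hα : 0 < α) (hαπ : α < Real.pi) (hs0 : 0 ≤ s) (hs1 : s ≤ 1)
    {h : ℝ → ℂ} (hh : IntegrableOn h (arc α))
    (hmh : IntegrableOn (fun θ => (mw α s θ : ℂ) * h θ) (arc α)) {τ ε : ℝ} (hε : 0 < ε)
    (hτ : τ ∈ arc α) :
    ‖(mw α s τ : ℂ) * TI α h τ ε - TI α (fun θ => (mw α s θ : ℂ) * h θ) τ ε‖ₑ ≤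
      ENNReal.ofReal (2 * Real.pi ^ 2 / α) *
        ∫⁻ θ in arc α, CK α s τ θ * ‖(mw α s θ : ℂ) * h θ‖ₑ := by
  have hmd : MeasurableSet (arc α \ Ioo (τ - ε) (τ + ε)) := measurableSet_Ioo.diff measurableSet_Ioo
  have hπ := Real.pi_pos
  rw [TI, TI, mul_left_comm, ← mul_sub, ← integral_const_mul, ← integral_sub
    ((integrableOn_trunc hα hαπ hh hε hτ).const_mul _) (integrableOn_trunc hα hαπ hmh hε hτ),
    enorm_mul]
  have hc : ‖((1 / (2 * Real.pi) : ℝ) : ℂ)‖ₑ ≤ 1 := by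
    rw [← ofReal_norm, Complex.norm_real, Real.norm_of_nonneg (by positivity),
      ← ENNReal.ofReal_one]
    refine ENNReal.ofReal_le_ofReal ?_
    rw [div_le_one (by positivity)]; linarith [Real.pi_gt_three]
  refine (mul_le_of_le_one_left' hc).trans ((enorm_integral_le_lintegral_enorm _).trans ?_)
  rw [← lintegral_const_mul' _ _ ENNReal.ofReal_ne_top]
  refine le_trans (setLIntegral_mono' hmd fun θ hθ => ?_) (lintegral_mono_set sdiff_subset)
  rw [mul_div_assoc', ← sub_div]
  refine kernel_comm_le hα hαπ hs0 hs1 hθ.1 hτ ?_ _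
  rintro rfl
  exact hθ.2 ⟨by linarith, by linarith⟩

/-! ### The Akhiezer–Chebyshev weight -/

lemma sin_half_ge {α a : ℝ} (hα : 0 < α) (hαπ : α < Real.pi) (ha : 0 ≤ a)
    (ha2 : a ≤ 2 * (Real.pi - α)) : α / Real.pi ^ 2 * a ≤ Real.sin (a / 2) := by
  have hπ := Real.pi_pos
  rcases le_total (a / 2) (Real.pi / 2) with h | h
  · refine le_trans ?_ (Real.mul_le_sin (by linarith) h)
    rw [div_mul_div_comm, div_mul_eq_mul_div, div_le_div_iff₀ (by positivity) (by positivity)]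
    have : α * a ≤ Real.pi * a := by gcongr
    nlinarith [mul_le_mul_of_nonneg_left this (by positivity : 0 ≤ Real.pi * 2)]
  · rw [← Real.sin_pi_sub]
    refine le_trans ?_ (Real.mul_le_sin (by linarith) (by linarith))
    have h1 : α / Real.pi * 2 ≤ 2 / Real.pi * (Real.pi - a / 2) := by
      rw [show α / Real.pi * 2 = 2 / Real.pi * α by ring]
      gcongr
      linarith
    refine le_trans ?_ h1
    have h2 : α / Real.pi ^ 2 * a = α / Real.pi * (a / Real.pi) := by field_simp
    rw [h2]
    gcongr
    rw [div_le_iff₀ hπ]; linarith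

/-- The radicand in the weight vanishes to first order at each of the two endpoints. -/
lemma cos_sq_sub (α θ : ℝ) : Real.cos (α / 2) ^ 2 - Real.cos (θ / 2) ^ 2 =
    Real.sin ((θ - α) / 2) * Real.sin ((2 * Real.pi - α - θ) / 2) := by
  rw [show (2 * Real.pi - α - θ) / 2 = Real.pi - (θ / 2 + α / 2) by ring, Real.sin_pi_sub,
    show (θ - α) / 2 = θ / 2 - α / 2 by ring, Real.sin_sub, Real.sin_add]
  have h1 := Real.sin_sq_add_cos_sq (α / 2)
  have h2 := Real.sin_sq_add_cos_sq (θ / 2)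
  linear_combination (-Real.cos (α / 2) ^ 2) * h2 + (Real.cos (θ / 2) ^ 2) * h1

lemma disc_le {α θ : ℝ} (hα : 0 < α) (h : θ ∈ arc α) :
    Real.cos (α / 2) ^ 2 - Real.cos (θ / 2) ^ 2 ≤ bd α θ := by
  have hθ1 := h.1
  have hθ2 := h.2
  rw [cos_sq_sub]
  have h1 : 0 ≤ Real.sin ((θ - α) / 2) :=
    Real.sin_nonneg_of_nonneg_of_le_pi (by linarith) (by linarith)
  have h2 : 0 ≤ Real.sin ((2 * Real.pi - α - θ) / 2) :=
    Real.sin_nonneg_of_nonneg_of_le_pi (by linarith) (by linarith)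
  refine le_min ?_ ?_
  · refine (mul_le_of_le_one_right h1 (Real.sin_le_one _)).trans
      ((Real.sin_le (by linarith)).trans (by linarith))
  · refine (mul_le_of_le_one_left h2 (Real.sin_le_one _)).trans
      ((Real.sin_le (by linarith)).trans (by linarith))

lemma le_disc {α θ : ℝ} (hα : 0 < α) (hαπ : α < Real.pi) (h : θ ∈ arc α) :
    (α / Real.pi ^ 2) ^ 2 * (Real.pi - α) * bd α θ ≤
      Real.cos (α / 2) ^ 2 - Real.cos (θ / 2) ^ 2 := by
  have hθ1 := h.1
  have hθ2 := h.2
  rw [cos_sq_sub]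
  have h1 := sin_half_ge hα hαπ (a := θ - α) (by linarith) (by linarith)
  have h2 := sin_half_ge hα hαπ (a := 2 * Real.pi - α - θ) (by linarith) (by linarith)
  have h3 : 0 ≤ α / Real.pi ^ 2 := by positivity
  have h4 : 0 ≤ α / Real.pi ^ 2 * (2 * Real.pi - α - θ) := mul_nonneg h3 (by linarith)
  have h5 : 0 ≤ α / Real.pi ^ 2 * (θ - α) := mul_nonneg h3 (by linarith)
  refine le_trans ?_ (mul_le_mul h1 h2 h4 (h5.trans h1))
  have h6 : (Real.pi - α) * bd α θ ≤ (θ - α) * (2 * Real.pi - α - θ) := by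
    unfold bd
    rcases le_total θ Real.pi with hc | hc
    · rw [min_eq_left (by linarith)]; nlinarith
    · rw [min_eq_right (by linarith)]; nlinarith
  nlinarith [mul_le_mul_of_nonneg_left h6 (sq_nonneg (α / Real.pi ^ 2))]

/-- The weight is comparable to `bd α ^ (-1/2)`. -/
lemma weight_bounds {α : ℝ} (hα : 0 < α) (hαπ : α < Real.pi) :
    ∃ c > 0, ∀ θ ∈ arc α, bd α θ ^ (-(1 / 2) : ℝ) ≤ c * wAC α θ ∧
      wAC α θ ≤ c * bd α θ ^ (-(1 / 2) : ℝ) := by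
  have hπ := Real.pi_pos
  have hs : 0 < Real.sin (α / 2) := Real.sin_pos_of_pos_of_lt_pi (by linarith) (by linarith)
  set k : ℝ := (α / Real.pi ^ 2) ^ 2 * (Real.pi - α) with hk
  have hk0 : 0 < k := by
    have : 0 < Real.pi - α := by linarith
    positivity
  have hrk : 0 < √k := Real.sqrt_pos.mpr hk0
  refine ⟨max (2 / Real.sin (α / 2)) (1 / √k), lt_max_of_lt_right (by positivity),
    fun θ hθ => ?_⟩
  have hb := bd_pos hθ
  have hrb : 0 < √(bd α θ) := Real.sqrt_pos.mpr hb
  have h1 := disc_le hα hθ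
  have h2 := le_disc hα hαπ hθ
  rw [← hk] at h2
  set D := Real.cos (α / 2) ^ 2 - Real.cos (θ / 2) ^ 2 with hD
  have hD0 : 0 < √D := Real.sqrt_pos.mpr ((by positivity : 0 < k * bd α θ).trans_le h2)
  have hr1 : √D ≤ √(bd α θ) := Real.sqrt_le_sqrt h1
  have hr2 : √k * √(bd α θ) ≤ √D := by
    rw [← Real.sqrt_mul hk0.le]; exact Real.sqrt_le_sqrt h2
  have hθ1 := hθ.1
  have hθ2 := hθ.2
  have hsθ1 : Real.sin (α / 2) ≤ Real.sin (θ / 2) := by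
    rcases le_total (θ / 2) (Real.pi / 2) with h | h
    · exact Real.sin_le_sin_of_le_of_le_pi_div_two (by linarith) h (by linarith)
    · rw [← Real.sin_pi_sub (θ / 2)]
      exact Real.sin_le_sin_of_le_of_le_pi_div_two (by linarith) (by linarith) (by linarith)
  have hsθ0 := hs.trans_le hsθ1
  have hsθ2 := Real.sin_le_one (θ / 2)
  have hpow : bd α θ ^ (-(1 / 2) : ℝ) = 1 / √(bd α θ) := by
    rw [Real.rpow_neg hb.le, ← Real.sqrt_eq_rpow, one_div]
  have hw0 : 0 ≤ wAC α θ := by unfold wAC; positivity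
  rw [hpow]
  constructor
  · refine le_trans ?_ (mul_le_mul_of_nonneg_right (le_max_left _ _) hw0)
    rw [wAC, ← hD, div_mul_div_cancel₀ hs.ne']
    rw [div_le_div_iff₀ hrb (by positivity)]
    have : Real.sin (θ / 2) * √D ≤ 1 * √(bd α θ) :=
      mul_le_mul hsθ2 hr1 hD0.le zero_le_one
    linarith
  · refine le_trans ?_ (mul_le_mul_of_nonneg_right (le_max_right _ _) (by positivity))
    rw [wAC, ← hD, div_mul_div_comm, div_le_div_iff₀ (by positivity) (by positivity)]
    have : Real.sin (α / 2) * (√k * √(bd α θ)) ≤ Real.sin (θ / 2) * √D :=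
      mul_le_mul hsθ1 hr2 (by positivity) hsθ0.le
    nlinarith [mul_pos hsθ0 hD0]

lemma measurable_wAC (α : ℝ) : Measurable (wAC α) := by
  unfold wAC; fun_prop

lemma mw_pow {α p θ : ℝ} (hp : 0 < p) (hθ : θ ∈ arc α) :
    ‖(mw α (1 / (2 * p)) θ : ℂ)‖ₑ ^ p = ENNReal.ofReal (bd α θ ^ (-(1 / 2) : ℝ)) := by
  have h0 := bd_pos hθ
  have hm : 0 ≤ mw α (1 / (2 * p)) θ := Real.rpow_nonneg h0.le _
  rw [← ofReal_norm, Complex.norm_real, Real.norm_of_nonneg hm,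
    ENNReal.ofReal_rpow_of_nonneg hm hp.le, mw, ← Real.rpow_mul h0.le]
  congr 2; field_simp

/-- The weighted bound, obtained from the unweighted one by commuting with the multiplier. -/
lemma arc_hilbert_weighted {α : ℝ} (hα : 0 < α) (hαπ : α < Real.pi) {p : ℝ} (hp : 1 < p) :
    ∃ C : NNReal, ∀ h : ℝ → ℂ, Measurable h →
      ∫⁻ θ in arc α, ‖h θ‖ₑ ^ p * ENNReal.ofReal (wAC α θ) ≠ ∞ →
      ∃ H : ℝ → ℂ, Measurable H ∧
        (∀ᵐ τ ∂volume.restrict (arc α),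
          Tendsto (TI α h τ) (nhdsWithin 0 (Ioi 0)) (nhds (H τ))) ∧
        ∫⁻ τ in arc α, ‖H τ‖ₑ ^ p * ENNReal.ofReal (wAC α τ) ≤
          C * ∫⁻ θ in arc α, ‖h θ‖ₑ ^ p * ENNReal.ofReal (wAC α θ) := by
  have hp0 : 0 < p := by linarith
  have hπ := Real.pi_pos
  obtain ⟨C₁, hC₁⟩ := arc_hilbert hα hαπ hp
  obtain ⟨C₂, hC₂⟩ := CK_bound α hp
  obtain ⟨c, hc, hcw⟩ := weight_bounds hα hαπ
  set s : ℝ := 1 / (2 * p) with hs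
  have hs0 : 0 ≤ s := by positivity
  have hs1 : s ≤ 1 := by rw [hs, div_le_one (by positivity)]; linarith
  set A : ℝ≥0∞ := ENNReal.ofReal (2 * Real.pi ^ 2 / α) with hA
  set W : ℝ → ℝ≥0∞ := fun θ => ENNReal.ofReal (wAC α θ) with hW
  set c' : ℝ≥0∞ := ENNReal.ofReal c with hc'
  have hW1 : ∀ θ ∈ arc α, ‖(mw α s θ : ℂ)‖ₑ ^ p ≤ c' * W θ := fun θ hθ => by
    rw [mw_pow hp0 hθ, hc', hW, ← ENNReal.ofReal_mul hc.le]
    exact ENNReal.ofReal_le_ofReal (hcw θ hθ).1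
  have hW2 : ∀ θ ∈ arc α, W θ ≤ c' * ‖(mw α s θ : ℂ)‖ₑ ^ p := fun θ hθ => by
    rw [mw_pow hp0 hθ, hc', hW, ← ENNReal.ofReal_mul hc.le]
    exact ENNReal.ofReal_le_ofReal (hcw θ hθ).2
  -- The multiplier is bounded below because `bd α ≤ π - α`.
  have hW3 : ∀ θ ∈ arc α, (1 : ℝ≥0∞) ≤
      ENNReal.ofReal (Real.pi ^ (1 / 2 : ℝ)) * ‖(mw α s θ : ℂ)‖ₑ ^ p := fun θ hθ => by
    have h0 := bd_pos hθ
    rw [mw_pow hp0 hθ, ← ENNReal.ofReal_mul (by positivity), ← ENNReal.ofReal_one]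
    refine ENNReal.ofReal_le_ofReal ?_
    rw [Real.rpow_neg h0.le, ← div_eq_mul_inv, le_div_iff₀ (by positivity), one_mul]
    exact Real.rpow_le_rpow h0.le ((bd_le α θ).trans (by linarith)) (by norm_num)
  set C : ℝ≥0∞ := c' * (2 ^ (p - 1) * (C₁ + A ^ p * C₂)) * c' with hC
  have hCt : C ≠ ∞ := by
    have h1 : A ^ p ≠ ∞ := ENNReal.rpow_ne_top_of_nonneg hp0.le ENNReal.ofReal_ne_top
    have h2 : (2 : ℝ≥0∞) ^ (p - 1) ≠ ∞ :=
      ENNReal.rpow_ne_top_of_nonneg (by linarith) (by norm_num)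
    have h3 : A ^ p * C₂ ≠ ∞ := ENNReal.mul_ne_top h1 ENNReal.coe_ne_top
    have h4 : (C₁ : ℝ≥0∞) + A ^ p * C₂ ≠ ∞ := ENNReal.add_ne_top.mpr ⟨ENNReal.coe_ne_top, h3⟩
    exact ENNReal.mul_ne_top (ENNReal.mul_ne_top ENNReal.ofReal_ne_top
      (ENNReal.mul_ne_top h2 h4)) ENNReal.ofReal_ne_top
  refine ⟨C.toNNReal, fun h hh hfin => ?_⟩
  rw [ENNReal.coe_toNNReal hCt]
  set g : ℝ → ℂ := fun θ => (mw α s θ : ℂ) * h θ with hg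
  have hmm : Measurable fun θ => (mw α s θ : ℂ) :=
    Complex.measurable_ofReal.comp (measurable_mw α s)
  have hgm : Measurable g := hmm.mul hh
  have hgp : ∀ θ, ‖g θ‖ₑ ^ p = ‖(mw α s θ : ℂ)‖ₑ ^ p * ‖h θ‖ₑ ^ p := fun θ => by
    rw [hg, enorm_mul, ENNReal.mul_rpow_of_nonneg _ _ hp0.le]
  have hgle : ∫⁻ θ in arc α, ‖g θ‖ₑ ^ p ≤ c' * ∫⁻ θ in arc α, ‖h θ‖ₑ ^ p * W θ := by
    rw [← lintegral_const_mul' _ _ ENNReal.ofReal_ne_top]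
    refine setLIntegral_mono' measurableSet_Ioo fun θ hθ => ?_
    rw [hgp θ]
    calc _ ≤ c' * W θ * ‖h θ‖ₑ ^ p := by gcongr; exact hW1 θ hθ
      _ = _ := by ring
  have hgfin : ∫⁻ θ in arc α, ‖g θ‖ₑ ^ p ≠ ∞ :=
    ne_top_of_le_ne_top (ENNReal.mul_ne_top ENNReal.ofReal_ne_top hfin) hgle
  have hhfin : ∫⁻ θ in arc α, ‖h θ‖ₑ ^ p ≠ ∞ := by
    refine ne_top_of_le_ne_top (ENNReal.mul_ne_top
      (ENNReal.ofReal_ne_top (r := Real.pi ^ (1 / 2 : ℝ))) hgfin) ?_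
    rw [← lintegral_const_mul' _ _ ENNReal.ofReal_ne_top]
    refine setLIntegral_mono' measurableSet_Ioo fun θ hθ => ?_
    rw [hgp θ, ← mul_assoc]
    exact le_mul_of_one_le_left' (hW3 θ hθ)
  have hint : ∀ k : ℝ → ℂ, Measurable k → ∫⁻ θ in arc α, ‖k θ‖ₑ ^ p ≠ ∞ →
      IntegrableOn k (arc α) := fun k hk hkf => by
    have : MemLp k (ENNReal.ofReal p) (volume.restrict (arc α)) := by
      refine ⟨hk.aestronglyMeasurable, ?_⟩
      rw [eLpNorm_eq_lintegral_rpow_enorm_toReal (by simpa using hp0) ENNReal.ofReal_ne_top,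
        ENNReal.toReal_ofReal hp0.le]
      exact ENNReal.rpow_lt_top_of_nonneg (by positivity) hkf
    exact this.integrable (by rw [← ENNReal.ofReal_one]; exact ENNReal.ofReal_le_ofReal hp.le)
  obtain ⟨H, hHm, hHt, -⟩ := hC₁ h hh hhfin
  obtain ⟨G, hGm, hGt, hGle⟩ := hC₁ g hgm hgfin
  refine ⟨H, hHm, hHt, ?_⟩
  set R : ℝ → ℝ≥0∞ := fun τ => ∫⁻ θ in arc α, CK α s τ θ * ‖g θ‖ₑ with hR
  have hRle : ∫⁻ τ in arc α, R τ ^ p ≤ C₂ * ∫⁻ θ in arc α, ‖g θ‖ₑ ^ p := hC₂ _ hgm.enorm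
  have hpt : ∀ᵐ τ ∂volume.restrict (arc α),
      ‖(mw α s τ : ℂ)‖ₑ ^ p * ‖H τ‖ₑ ^ p ≤ 2 ^ (p - 1) * (‖G τ‖ₑ ^ p + A ^ p * R τ ^ p) := by
    filter_upwards [hHt, hGt, ae_restrict_mem measurableSet_Ioo] with τ h1 h2 hτ
    have h3 : ‖(mw α s τ : ℂ) * H τ - G τ‖ₑ ≤ A * R τ := by
      refine le_of_tendsto ((h1.const_mul (mw α s τ : ℂ)).sub h2).enorm ?_
      filter_upwards [self_mem_nhdsWithin] with ε hε
      exact TI_comm_le hα hαπ hs0 hs1 (hint h hh hhfin) (hint g hgm hgfin) hε hτ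
    have h4 : ‖(mw α s τ : ℂ) * H τ‖ₑ ≤ ‖G τ‖ₑ + A * R τ := by
      calc _ = ‖G τ + ((mw α s τ : ℂ) * H τ - G τ)‖ₑ := by congr 1; ring
        _ ≤ _ := (enorm_add_le _ _).trans (by gcongr)
    rw [← ENNReal.mul_rpow_of_nonneg _ _ hp0.le, ← ENNReal.mul_rpow_of_nonneg _ _ hp0.le,
      ← enorm_mul]
    exact (ENNReal.rpow_le_rpow h4 hp0.le).trans (ENNReal.rpow_add_le_mul_rpow_add_rpow _ _ hp.le)
  have h2t : (2 : ℝ≥0∞) ^ (p - 1) ≠ ∞ :=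
    ENNReal.rpow_ne_top_of_nonneg (by linarith) (by norm_num)
  have hAt : A ^ p ≠ ∞ := ENNReal.rpow_ne_top_of_nonneg hp0.le ENNReal.ofReal_ne_top
  calc ∫⁻ τ in arc α, ‖H τ‖ₑ ^ p * W τ
      ≤ ∫⁻ τ in arc α, c' * (2 ^ (p - 1) * (‖G τ‖ₑ ^ p + A ^ p * R τ ^ p)) := by
        refine lintegral_mono_ae ?_
        filter_upwards [hpt, ae_restrict_mem measurableSet_Ioo] with τ h1 hτ
        calc ‖H τ‖ₑ ^ p * W τ ≤ ‖H τ‖ₑ ^ p * (c' * ‖(mw α s τ : ℂ)‖ₑ ^ p) := by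
              gcongr; exact hW2 τ hτ
          _ = c' * (‖(mw α s τ : ℂ)‖ₑ ^ p * ‖H τ‖ₑ ^ p) := by ring
          _ ≤ _ := by gcongr
    _ = c' * (2 ^ (p - 1) * ((∫⁻ τ in arc α, ‖G τ‖ₑ ^ p) +
          A ^ p * ∫⁻ τ in arc α, R τ ^ p)) := by
        rw [lintegral_const_mul' _ _ ENNReal.ofReal_ne_top, lintegral_const_mul' _ _ h2t,
          lintegral_add_left (hGm.enorm.pow_const p), lintegral_const_mul' _ _ hAt]
    _ ≤ c' * (2 ^ (p - 1) * (C₁ * (∫⁻ θ in arc α, ‖g θ‖ₑ ^ p) +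
          A ^ p * (C₂ * ∫⁻ θ in arc α, ‖g θ‖ₑ ^ p))) := by gcongr
    _ = c' * (2 ^ (p - 1) * (C₁ + A ^ p * C₂)) * ∫⁻ θ in arc α, ‖g θ‖ₑ ^ p := by ring
    _ ≤ c' * (2 ^ (p - 1) * (C₁ + A ^ p * C₂)) * (c' * ∫⁻ θ in arc α, ‖h θ‖ₑ ^ p * W θ) := by
        gcongr
    _ = _ := by rw [hC]; ring

theorem stmt2 (α : ℝ) (hα : α ∈ Set.Ioo 0 Real.pi) (p : ℝ) (hp : 1 < p) :
    ∃ C > (0 : ℝ), ∀ f : ℂ → ℂ,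
      (Measurable fun θ : ℝ => f (Complex.exp (θ * Complex.I))) →
      IntegrableOn (fun θ : ℝ => ‖f (Complex.exp (θ * Complex.I))‖ ^ p * wAC α θ)
        (Set.Ioo α (2 * Real.pi - α)) →
      ∃ H : ℝ → ℂ, Measurable H ∧
        (∀ᵐ τ ∂(volume.restrict (Set.Ioo α (2 * Real.pi - α))),
          Tendsto (fun ε : ℝ =>
              ((1 / (2 * Real.pi) : ℝ) : ℂ) *
                ∫ θ in Set.Ioo α (2 * Real.pi - α) \ Set.Ioo (τ - ε) (τ + ε),
                  f (Complex.exp (θ * Complex.I)) /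
                    (Complex.exp (τ * Complex.I) - Complex.exp (θ * Complex.I)))
            (nhdsWithin 0 (Set.Ioi 0)) (nhds (H τ))) ∧
        ∫ τ in Set.Ioo α (2 * Real.pi - α), ‖H τ‖ ^ p * wAC α τ ≤
          C * ∫ τ in Set.Ioo α (2 * Real.pi - α),
            ‖f (Complex.exp (τ * Complex.I))‖ ^ p * wAC α τ := by
  obtain ⟨hα0, hαπ⟩ := hα
  have hp0 : 0 < p := by linarith
  obtain ⟨C, hC⟩ := arc_hilbert_weighted hα0 hαπ hp
  obtain ⟨c, hc, hcw⟩ := weight_bounds hα0 hαπ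
  have hw0 : ∀ θ ∈ arc α, 0 ≤ wAC α θ := fun θ hθ =>
    nonneg_of_mul_nonneg_right ((Real.rpow_nonneg (bd_pos hθ).le _).trans (hcw θ hθ).1) hc
  have key : ∀ k : ℝ → ℂ, Measurable k → ∫ τ in arc α, ‖k τ‖ ^ p * wAC α τ =
      (∫⁻ τ in arc α, ‖k τ‖ₑ ^ p * ENNReal.ofReal (wAC α τ)).toReal := fun k hk => by
    rw [integral_eq_lintegral_of_nonneg_ae]
    · congr 1
      refine lintegral_congr fun τ => ?_
      rw [ENNReal.ofReal_mul (by positivity), ← ENNReal.ofReal_rpow_of_nonneg (norm_nonneg _) hp0.le,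
        ofReal_norm]
    · filter_upwards [ae_restrict_mem measurableSet_Ioo] with θ hθ
      exact mul_nonneg (by positivity) (hw0 θ hθ)
    · exact ((hk.norm.pow_const p).mul (measurable_wAC α)).aestronglyMeasurable
  refine ⟨C + 1, by positivity, fun f hf hfi => ?_⟩
  have hfin : ∫⁻ θ in arc α, ‖f (Complex.exp (θ * Complex.I))‖ₑ ^ p * ENNReal.ofReal (wAC α θ)
      ≠ ∞ := by
    have h1 := hfi.2
    rw [hasFiniteIntegral_iff_ofReal] at h1
    · refine ne_of_lt (lt_of_le_of_lt (le_of_eq ?_) h1)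
      refine lintegral_congr fun τ => ?_
      rw [ENNReal.ofReal_mul (by positivity), ← ENNReal.ofReal_rpow_of_nonneg (norm_nonneg _) hp0.le,
        ofReal_norm]
    · filter_upwards [ae_restrict_mem measurableSet_Ioo] with θ hθ
      exact mul_nonneg (by positivity) (hw0 θ hθ)
  obtain ⟨H, hHm, hHt, hHle⟩ := hC (fun θ => f (Complex.exp (θ * Complex.I))) hf hfin
  refine ⟨H, hHm, hHt, ?_⟩
  rw [key H hHm, key _ hf]
  refine (ENNReal.toReal_mono (ENNReal.mul_ne_top ENNReal.coe_ne_top hfin) hHle).trans ?_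
  rw [ENNReal.toReal_mul, ENNReal.coe_toReal]
  exact mul_le_mul_of_nonneg_right (by linarith) ENNReal.toReal_nonneg
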